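/- arXiv:1101.2718 — 2 statements merged into one kernel-verified Lean document; each statement's English description precedes it below -/
import Mathlib

section
/- For all m, k ≥ 0 and all odd integers c, c' ≥ 3, the nim-value of graph chomp on the graph G_{m,k} built on a cycle of length c equals the nim-value of graph chomp on the graph G_{m,k} built on a cycle of length c'; that is, g(G_{m,k}) does not depend on the (odd) length of the cycle. -/
/-!
For a bipartite graph the nim-value of graph chomp is `(V mod 2) + 2 (E mod 2)`: deleting an edge
flips the parity of `E`, deleting a vertex flips that of `V`, so no option has the same value, and
double counting incidences (over one colour class, respectively over all vertices) provides the
vertices of odd, respectively even, degree needed to reach all smaller values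
(`grundy_eq_of_bipartite`).

Now let an odd cycle `C` share its vertex `A` with a bipartite graph `H`. A move on the cycle makes
the whole graph bipartite, and the value of the result depends only on `H` and on whether an edge,
a vertex other than `A`, or `A` was deleted, since `C` has oddly many vertices and edges. A move on
`H` leads to a position of the same kind with the same cycle. By induction on `H`, the nim-value of
`C ∪ H` does not depend on the odd length of the cycle (`grundy_cyc_union`). The graph `G_{m,k}` is
an instance once it is relabelled so that `H` carries the same labels for all cycle lengths: cycle
vertices become even numbers, with `A = 0`, and all other vertices become odd numbers.
-/

attribute [local instance] Classical.propDecidable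

/-- The minimal excludant of a finite set of naturals. -/
noncomputable def mex (s : Finset ℕ) : ℕ := sInf {n : ℕ | n ∉ s}

/-- The position resulting from choosing `σ` in subset take-away:
remove `σ` together with every element containing it. -/
noncomputable def takeawayMove {V : Type*} [DecidableEq V] (Δ : Finset (Finset V))
    (σ : Finset V) : Finset (Finset V) :=
  Δ.filter (fun t => ¬ σ ⊆ t)

/-- The Grundy (nim-)value of subset take-away played on `Δ`: the minimal excludant of the
Grundy values of all positions reachable in one move. -/
noncomputable def grundy {V : Type*} [DecidableEq V] (Δ : Finset (Finset V)) : ℕ :=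
  mex (Δ.attach.image (fun σ => grundy (takeawayMove Δ σ.1)))
termination_by Δ.card
decreasing_by
  simp only [takeawayMove]
  exact Finset.card_lt_card (Finset.filter_ssubset.mpr ⟨σ.1, σ.2, by simp⟩)

/-- The graph `G_{m,k}` built on a cycle of length `c`, as a simplicial complex of vertices
and edges on the vertex set `{0, …, c + m + k}`: the vertices `0, …, c - 1` form the cycle,
the vertex `B = c` is joined by an edge to the cycle vertex `A = 0`, an `m`-tail
`c + 1, …, c + m` is attached at `B`, and a `k`-tail `c + m + 1, …, c + m + k` is attached
at `B`. -/
noncomputable def Gmk (c m k : ℕ) : Finset (Finset ℕ) :=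
  ((Finset.range (c + 1 + m + k)).image (fun i => ({i} : Finset ℕ))) ∪
    ((Finset.range c).image (fun i => ({i, (i + 1) % c} : Finset ℕ))) ∪
    ({({0, c} : Finset ℕ)} : Finset (Finset ℕ)) ∪
    ((Finset.range m).image (fun i => ({c + i, c + i + 1} : Finset ℕ))) ∪
    ((Finset.range k).image (fun i =>
      ({if i = 0 then c else c + m + i, c + m + i + 1} : Finset ℕ)))

/-! ### Minimal excludants and nim-values -/

lemma mex_eq {s : Finset ℕ} {n : ℕ} (h : n ∉ s) (h' : ∀ i < n, i ∈ s) : mex s = n := by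
  unfold mex
  apply le_antisymm
  · exact Nat.sInf_le h
  · by_contra hlt
    have hne : {n : ℕ | n ∉ s}.Nonempty := ⟨n, h⟩
    exact Nat.sInf_mem hne (h' _ (not_le.mp hlt))

lemma grundy_eq {V : Type*} [DecidableEq V] (Δ : Finset (Finset V)) :
    grundy Δ = mex (Δ.image (fun σ => grundy (takeawayMove Δ σ))) := by
  rw [grundy]
  congr 1
  ext n
  simp

lemma mem_takeaway {V : Type*} [DecidableEq V] {Δ : Finset (Finset V)} {σ t : Finset V} :
    t ∈ takeawayMove Δ σ ↔ t ∈ Δ ∧ ¬ σ ⊆ t := by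
  simp [takeawayMove]

lemma card_takeaway_lt {V : Type*} [DecidableEq V] {Δ : Finset (Finset V)} {σ : Finset V}
    (h : σ ∈ Δ) : (takeawayMove Δ σ).card < Δ.card := by
  apply Finset.card_lt_card
  exact Finset.filter_ssubset.mpr ⟨σ, h, by simp⟩

/-- The complex obtained from `Δ` by renaming its vertices along `φ`. -/
noncomputable def renameVertices (φ : ℕ ↪ ℕ) (Δ : Finset (Finset ℕ)) : Finset (Finset ℕ) :=
  Δ.image (Finset.map φ)

lemma takeaway_rename (φ : ℕ ↪ ℕ) (Δ : Finset (Finset ℕ)) (σ : Finset ℕ) :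
    takeawayMove (renameVertices φ Δ) (σ.map φ) = renameVertices φ (takeawayMove Δ σ) := by
  ext t
  simp only [renameVertices, mem_takeaway, Finset.mem_image]
  constructor
  · rintro ⟨⟨a, ha, rfl⟩, h⟩
    exact ⟨a, ⟨ha, fun hs => h (Finset.map_subset_map.mpr hs)⟩, rfl⟩
  · rintro ⟨a, ⟨ha, h⟩, rfl⟩
    exact ⟨⟨a, ha, rfl⟩, fun hs => h (Finset.map_subset_map.mp hs)⟩

lemma grundy_rename (φ : ℕ ↪ ℕ) (Δ : Finset (Finset ℕ)) :
    grundy (renameVertices φ Δ) = grundy Δ := by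
  induction hn : Δ.card using Nat.strong_induction_on generalizing Δ with
  | _ n ih =>
    subst hn
    rw [grundy_eq, grundy_eq Δ]
    congr 1
    conv_lhs => rw [show renameVertices φ Δ = Δ.image (Finset.map φ) from rfl, Finset.image_image]
    apply Finset.image_congr
    intro σ hσ
    have h := takeaway_rename φ Δ σ
    simp only [Function.comp, ← show renameVertices φ Δ = Δ.image (Finset.map φ) from rfl, h]
    exact ih _ (card_takeaway_lt hσ) _ rfl

/-! ### Counting vertices and edges -/

/-- The number of faces with `d` vertices: `numFaces 1` counts vertices, `numFaces 2` edges. -/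
noncomputable def numFaces (d : ℕ) (Δ : Finset (Finset ℕ)) : ℕ :=
  (Δ.filter (fun t => t.card = d)).card

/-- The number of faces with `d` vertices that contain `s`; for a singleton `s` and `d = 2` this
is the degree of a vertex. -/
noncomputable def numAbove (d : ℕ) (Δ : Finset (Finset ℕ)) (s : Finset ℕ) : ℕ :=
  (Δ.filter (fun t => t.card = d ∧ s ⊆ t)).card

lemma numFaces_takeaway (d : ℕ) (Δ : Finset (Finset ℕ)) (s : Finset ℕ) :
    numFaces d (takeawayMove Δ s) + numAbove d Δ s = numFaces d Δ := by
  unfold numFaces numAbove takeawayMove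
  rw [← Finset.card_filter_add_card_filter_not (s := Δ.filter (fun t => t.card = d))
    (fun t => s ⊆ t), Finset.filter_filter, Finset.filter_filter, Finset.filter_filter, add_comm]
  congr 2
  ext t
  simp [and_comm]

lemma numAbove_self {Δ : Finset (Finset ℕ)} {s : Finset ℕ} (hs : s ∈ Δ) :
    numAbove s.card Δ s = 1 := by
  unfold numAbove
  rw [Finset.card_eq_one]
  refine ⟨s, ?_⟩
  ext t
  simp only [Finset.mem_filter, Finset.mem_singleton]
  constructor
  · rintro ⟨_, h1, h2⟩
    exact (Finset.eq_of_subset_of_card_le h2 h1.le).symm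
  · rintro rfl
    exact ⟨hs, rfl, subset_rfl⟩

lemma numAbove_of_lt {d : ℕ} {Δ : Finset (Finset ℕ)} {s : Finset ℕ} (hs : d < s.card) :
    numAbove d Δ s = 0 := by
  unfold numAbove
  rw [Finset.card_eq_zero, Finset.filter_eq_empty_iff]
  rintro t _ ⟨h1, h2⟩
  have := Finset.card_le_card h2
  omega

lemma numFaces_union {d : ℕ} {C H : Finset (Finset ℕ)} (h : Disjoint C H) :
    numFaces d (C ∪ H) = numFaces d C + numFaces d H := by
  unfold numFaces
  rw [Finset.filter_union, Finset.card_union_of_disjoint]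
  exact Finset.disjoint_filter_filter h

lemma numAbove_union {d : ℕ} {C H : Finset (Finset ℕ)} (s : Finset ℕ) (h : Disjoint C H) :
    numAbove d (C ∪ H) s = numAbove d C s + numAbove d H s := by
  unfold numAbove
  rw [Finset.filter_union, Finset.card_union_of_disjoint]
  exact Finset.disjoint_filter_filter h

/-! ### Bipartite graphs -/

/-- `Δ` is a graph: its members are singletons (vertices) and pairs (edges), and the end points of
every edge are vertices. -/
structure IsGraph (Δ : Finset (Finset ℕ)) : Prop where
  card : ∀ t ∈ Δ, t.card = 1 ∨ t.card = 2
  closed : ∀ t ∈ Δ, ∀ v ∈ t, {v} ∈ Δ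

/-- `f` is a proper 2-colouring of the vertices of `Δ`. -/
def IsColoring (f : ℕ → Bool) (Δ : Finset (Finset ℕ)) : Prop :=
  ∀ u v, u ≠ v → {u, v} ∈ Δ → f u ≠ f v

lemma IsGraph.takeaway {Δ : Finset (Finset ℕ)} (h : IsGraph Δ) (σ : Finset ℕ) :
    IsGraph (takeawayMove Δ σ) where
  card t ht := h.card t (mem_takeaway.mp ht).1
  closed t ht v hv := by
    rw [mem_takeaway] at ht ⊢
    exact ⟨h.closed t ht.1 v hv,
      fun hs => ht.2 (hs.trans (Finset.singleton_subset_iff.mpr hv))⟩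

lemma IsColoring.takeaway {f : ℕ → Bool} {Δ : Finset (Finset ℕ)} (h : IsColoring f Δ)
    (σ : Finset ℕ) : IsColoring f (takeawayMove Δ σ) :=
  fun u v huv ht => h u v huv (mem_takeaway.mp ht).1

/-- Every edge has exactly one end point of colour `b`, so the degrees of the vertices of
colour `b` add up to the number of edges. -/
lemma sum_degree_color {Δ : Finset (Finset ℕ)} (h : IsGraph Δ) {f : ℕ → Bool}
    (hf : IsColoring f Δ) (b : Bool) :
    ∑ s ∈ (Δ.filter (fun t => t.card = 1)).filter (fun s => ∀ v ∈ s, f v = b), numAbove 2 Δ s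
      = numFaces 2 Δ := by
  have key : ∀ e ∈ Δ.filter (fun t => t.card = 2),
      (((Δ.filter (fun t => t.card = 1)).filter (fun s => ∀ v ∈ s, f v = b)).filter
        (fun s => s ⊆ e)).card = 1 := by
    intro e he
    obtain ⟨heΔ, he2⟩ := Finset.mem_filter.mp he
    obtain ⟨u, w, huw, rfl⟩ := Finset.card_eq_two.mp he2
    have hfw := hf u w huw heΔ
    have hu := h.closed _ heΔ u (by simp)
    have hw := h.closed _ heΔ w (by simp)
    rw [Finset.card_eq_one]
    have main : ∀ x y : ℕ, {x} ∈ Δ → f x = b → f y ≠ b →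
        ((Δ.filter (fun t => t.card = 1)).filter (fun s => ∀ v ∈ s, f v = b)).filter
        (fun s => s ⊆ {x, y}) = {{x}} := by
      intro x y hx hxb hyb
      ext s
      simp only [Finset.mem_filter, Finset.mem_singleton]
      constructor
      · rintro ⟨⟨⟨hs, hs1⟩, hs2⟩, hs3⟩
        obtain ⟨a, rfl⟩ := Finset.card_eq_one.mp hs1
        have : a = x ∨ a = y := by simpa using hs3
        rcases this with rfl | rfl
        · rfl
        · exact absurd (hs2 a (by simp)) hyb
      · rintro rfl
        exact ⟨⟨⟨hx, by simp⟩, by simpa using hxb⟩, by simp⟩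
    by_cases hb : f u = b
    · exact ⟨{u}, main u w hu hb (fun h => hfw (hb.trans h.symm))⟩
    · refine ⟨{w}, ?_⟩
      rw [Finset.pair_comm u w]
      refine main w u hw ?_ hb
      revert hfw hb
      cases f u <;> cases f w <;> cases b <;> simp
  unfold numFaces
  rw [Finset.card_eq_sum_ones, ← Finset.sum_congr rfl key]
  have := Finset.sum_card_bipartiteAbove_eq_sum_card_bipartiteBelow
    (s := (Δ.filter (fun t => t.card = 1)).filter (fun s => ∀ v ∈ s, f v = b))
    (t := Δ.filter (fun t => t.card = 2)) (fun s e => s ⊆ e)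
  simp only [Finset.bipartiteAbove, Finset.bipartiteBelow] at this
  rw [← this]
  apply Finset.sum_congr rfl
  intro s _
  unfold numAbove
  rw [Finset.filter_filter]

lemma sum_degree {Δ : Finset (Finset ℕ)} (h : IsGraph Δ) {f : ℕ → Bool}
    (hf : IsColoring f Δ) :
    ∑ s ∈ Δ.filter (fun t => t.card = 1), numAbove 2 Δ s = numFaces 2 Δ + numFaces 2 Δ := by
  rw [← Finset.sum_filter_add_sum_filter_not (Δ.filter (fun t => t.card = 1))
      (fun s => ∀ v ∈ s, f v = true), sum_degree_color h hf true]
  congr 1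
  rw [← sum_degree_color h hf false]
  apply Finset.sum_congr _ (fun _ _ => rfl)
  ext s
  simp only [Finset.mem_filter]
  refine and_congr_right ?_
  rintro ⟨_, hs⟩
  obtain ⟨a, rfl⟩ := Finset.card_eq_one.mp hs
  simp

lemma exists_odd_degree {Δ : Finset (Finset ℕ)} (h : IsGraph Δ) {f : ℕ → Bool}
    (hf : IsColoring f Δ) (hE : numFaces 2 Δ % 2 = 1) :
    ∃ s ∈ Δ, s.card = 1 ∧ numAbove 2 Δ s % 2 = 1 := by
  by_contra hcon
  push Not at hcon
  have hs := sum_degree_color h hf true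
  have : Even (numFaces 2 Δ) := by
    rw [← hs]
    apply Finset.even_sum
    intro s hs
    simp only [Finset.mem_filter] at hs
    have := hcon s hs.1.1 hs.1.2
    rw [Nat.even_iff]
    omega
  rw [Nat.even_iff] at this
  omega

lemma exists_even_degree {Δ : Finset (Finset ℕ)} (h : IsGraph Δ) {f : ℕ → Bool}
    (hf : IsColoring f Δ) (hV : numFaces 1 Δ % 2 = 1) :
    ∃ s ∈ Δ, s.card = 1 ∧ numAbove 2 Δ s % 2 = 0 := by
  by_contra hcon
  push Not at hcon
  have hs := sum_degree h hf
  have hodd : Odd (∑ s ∈ Δ.filter (fun t => t.card = 1), numAbove 2 Δ s) := by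
    rw [Finset.odd_sum_iff_odd_card_odd, Finset.filter_true_of_mem]
    · exact Nat.odd_iff.mpr hV
    · intro s hs
      simp only [Finset.mem_filter] at hs
      have := hcon s hs.1 hs.2
      rw [Nat.odd_iff]
      omega
  rw [hs, Nat.odd_iff] at hodd
  omega

/-- The nim-value of a bipartite graph with `a` vertices and `b` edges. -/
def parityValue (a b : ℕ) : ℕ := a % 2 + 2 * (b % 2)

theorem grundy_eq_of_bipartite {Δ : Finset (Finset ℕ)} (h : IsGraph Δ) {f : ℕ → Bool}
    (hf : IsColoring f Δ) : grundy Δ = parityValue (numFaces 1 Δ) (numFaces 2 Δ) := by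
  induction hn : Δ.card using Nat.strong_induction_on generalizing Δ with
  | _ n ih =>
    subst hn
    have hopt : ∀ σ ∈ Δ, grundy (takeawayMove Δ σ) = parityValue
        (numFaces 1 (takeawayMove Δ σ)) (numFaces 2 (takeawayMove Δ σ)) := fun σ hσ =>
      ih _ (card_takeaway_lt hσ) (h.takeaway σ) (hf.takeaway σ) rfl
    have hedge : ∀ σ ∈ Δ, σ.card = 2 → numFaces 1 (takeawayMove Δ σ) = numFaces 1 Δ ∧
        numFaces 2 (takeawayMove Δ σ) + 1 = numFaces 2 Δ := by
      intro σ hσ h2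
      have e1 := numFaces_takeaway 1 Δ σ
      have e2 := numFaces_takeaway 2 Δ σ
      have e3 := numAbove_self hσ
      rw [h2] at e3
      rw [numAbove_of_lt (by omega)] at e1
      omega
    have hvert : ∀ σ ∈ Δ, σ.card = 1 → numFaces 1 (takeawayMove Δ σ) + 1 = numFaces 1 Δ ∧
        numFaces 2 (takeawayMove Δ σ) + numAbove 2 Δ σ = numFaces 2 Δ := by
      intro σ hσ h1
      have e1 := numFaces_takeaway 1 Δ σ
      have e2 := numFaces_takeaway 2 Δ σ
      have e3 := numAbove_self hσ
      rw [h1] at e3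
      omega
    rw [grundy_eq]
    apply mex_eq
    · simp only [Finset.mem_image, not_exists, not_and]
      intro σ hσ
      rw [hopt σ hσ]
      unfold parityValue
      rcases h.card σ hσ with h1 | h2
      · have := hvert σ hσ h1
        omega
      · have := hedge σ hσ h2
        omega
    · intro i hi
      simp only [Finset.mem_image]
      unfold parityValue at hi hopt
      -- Which deletion reaches `i` depends on the parities that `i` prescribes.
      by_cases hiV : i % 2 = numFaces 1 Δ % 2
      · have hE : numFaces 2 Δ % 2 = 1 := by omega
        obtain ⟨e, he⟩ : (Δ.filter (fun t => t.card = 2)).Nonempty := by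
          rw [← Finset.card_pos]
          change 0 < numFaces 2 Δ
          omega
        obtain ⟨he, he2⟩ := Finset.mem_filter.mp he
        refine ⟨e, he, ?_⟩
        have := hedge e he he2
        rw [hopt e he]
        omega
      · by_cases hiE : i / 2 = numFaces 2 Δ % 2
        · obtain ⟨s, hs, hs1, hs2⟩ := exists_even_degree h hf (by omega)
          refine ⟨s, hs, ?_⟩
          have := hvert s hs hs1
          rw [hopt s hs]
          omega
        · obtain ⟨s, hs, hs1, hs2⟩ := exists_odd_degree h hf (by omega)
          refine ⟨s, hs, ?_⟩
          have := hvert s hs hs1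
          rw [hopt s hs]
          omega

/-! ### The cycle -/

/-- The `i`-th edge of the cycle on the vertices `0, 2, …, 2 (c - 1)`. -/
def cycEdge (c i : ℕ) : Finset ℕ := {2 * i, 2 * ((i + 1) % c)}

/-- The cycle of length `c` on the vertices `0, 2, …, 2 (c - 1)`. -/
noncomputable def cyc (c : ℕ) : Finset (Finset ℕ) :=
  (Finset.range c).image (fun i => ({2 * i} : Finset ℕ)) ∪ (Finset.range c).image (cycEdge c)

lemma succ_mod_of_lt {c i : ℕ} (h : i < c) :
    (i + 1 < c ∧ (i + 1) % c = i + 1) ∨ (i + 1 = c ∧ (i + 1) % c = 0) := by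
  rcases Nat.lt_or_ge (i + 1) c with h1 | h1
  · exact Or.inl ⟨h1, Nat.mod_eq_of_lt h1⟩
  · have : i + 1 = c := by omega
    exact Or.inr ⟨this, by simp [this]⟩

lemma card_cycEdge {c i : ℕ} (hc : 3 ≤ c) (hi : i < c) : (cycEdge c i).card = 2 := by
  apply Finset.card_pair
  rcases succ_mod_of_lt hi with h | h <;> omega

lemma mem_cycEdge {c i v : ℕ} : v ∈ cycEdge c i ↔ v = 2 * i ∨ v = 2 * ((i + 1) % c) := by
  simp [cycEdge]

lemma cycEdge_inj {c i j : ℕ} (hc : 3 ≤ c) (hi : i < c) (hj : j < c)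
    (h : cycEdge c i = cycEdge c j) : i = j := by
  have h1 : 2 * i ∈ cycEdge c j := by rw [← h]; simp [mem_cycEdge]
  have h2 : 2 * ((i + 1) % c) ∈ cycEdge c j := by rw [← h]; simp [mem_cycEdge]
  rw [mem_cycEdge] at h1 h2
  rcases succ_mod_of_lt hi with hi' | hi' <;> rcases succ_mod_of_lt hj with hj' | hj' <;> omega

lemma mem_cyc {c : ℕ} {t : Finset ℕ} :
    t ∈ cyc c ↔ (∃ i < c, t = {2 * i}) ∨ ∃ i < c, t = cycEdge c i := by
  simp [cyc, eq_comm]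

lemma even_of_mem_cyc {c : ℕ} {t : Finset ℕ} (ht : t ∈ cyc c) {v : ℕ} (hv : v ∈ t) :
    ¬ Odd v := by
  rw [Nat.not_odd_iff_even, even_iff_two_dvd]
  rcases mem_cyc.mp ht with ⟨i, _, rfl⟩ | ⟨i, _, rfl⟩
  · simp at hv; omega
  · rw [mem_cycEdge] at hv; omega

lemma filter_cyc_two {c : ℕ} (hc : 3 ≤ c) (P : Finset ℕ → Prop) :
    (cyc c).filter (fun t => t.card = 2 ∧ P t) =
      ((Finset.range c).filter (fun i => P (cycEdge c i))).image (cycEdge c) := by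
  ext t
  simp only [Finset.mem_filter, Finset.mem_image, Finset.mem_range, mem_cyc]
  constructor
  · rintro ⟨⟨i, hi, rfl⟩ | ⟨i, hi, rfl⟩, h1, h2⟩
    · simp at h1
    · exact ⟨i, ⟨hi, h2⟩, rfl⟩
  · rintro ⟨i, ⟨hi, h2⟩, rfl⟩
    exact ⟨Or.inr ⟨i, hi, rfl⟩, card_cycEdge hc hi, h2⟩

lemma card_filter_cyc_two {c : ℕ} (hc : 3 ≤ c) (P : Finset ℕ → Prop) :
    ((cyc c).filter (fun t => t.card = 2 ∧ P t)).card =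
      ((Finset.range c).filter (fun i => P (cycEdge c i))).card := by
  rw [filter_cyc_two hc, Finset.card_image_of_injOn]
  intro i hi j hj h
  simp only [Finset.coe_filter, Finset.mem_range, Set.mem_ofPred_eq] at hi hj
  exact cycEdge_inj hc hi.1 hj.1 h

lemma numFaces_two_cyc {c : ℕ} (hc : 3 ≤ c) : numFaces 2 (cyc c) = c := by
  have := card_filter_cyc_two hc (fun _ => True)
  simpa [numFaces] using this

lemma numFaces_one_cyc {c : ℕ} (hc : 3 ≤ c) : numFaces 1 (cyc c) = c := by
  have : (cyc c).filter (fun t => t.card = 1) =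
      (Finset.range c).image (fun i => ({2 * i} : Finset ℕ)) := by
    ext t
    simp only [Finset.mem_filter, Finset.mem_image, Finset.mem_range, mem_cyc]
    constructor
    · rintro ⟨⟨i, hi, rfl⟩ | ⟨i, hi, rfl⟩, h1⟩
      · exact ⟨i, hi, rfl⟩
      · rw [card_cycEdge hc hi] at h1; omega
    · rintro ⟨i, hi, rfl⟩
      exact ⟨Or.inl ⟨i, hi, rfl⟩, by simp⟩
  unfold numFaces
  rw [this, Finset.card_image_of_injective, Finset.card_range]
  intro i j h
  simpa using h

lemma degree_cyc {c j : ℕ} (hc : 3 ≤ c) (hj : j < c) : numAbove 2 (cyc c) {2 * j} = 2 := by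
  unfold numAbove
  refine Eq.trans (by convert card_filter_cyc_two hc (fun t => {2 * j} ⊆ t)) ?_
  rw [Finset.card_eq_two]
  -- The two edges at vertex `j` are the `j`-th one and its cyclic predecessor.
  refine ⟨j, if j = 0 then c - 1 else j - 1, by split_ifs <;> omega, ?_⟩
  ext i
  simp only [Finset.mem_filter, Finset.mem_range, Finset.singleton_subset_iff, mem_cycEdge,
    Finset.mem_insert, Finset.mem_singleton]
  constructor
  · rintro ⟨hi, h⟩
    rcases succ_mod_of_lt hi with h' | h' <;> split_ifs <;> omega
  · intro h
    have hi : i < c := by split_ifs at h <;> omega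
    refine ⟨hi, ?_⟩
    rcases succ_mod_of_lt hi with h' | h' <;> split_ifs at h <;> omega

/-- A colouring of the odd cycle that is proper except at the `j`-th edge: colours alternate along
the path that starts after that edge. -/
noncomputable def cutColor (j i : ℕ) : Bool := xor (decide (i % 2 = 0)) (decide (i ≤ j))

lemma cutColor_ne {c i j : ℕ} (hodd : Odd c) (hi : i < c) (hj : j < c) (hij : i ≠ j) :
    cutColor j i ≠ cutColor j ((i + 1) % c) := by
  rw [Nat.odd_iff] at hodd
  unfold cutColor
  intro h
  rcases succ_mod_of_lt hi with ⟨h1, h2⟩ | ⟨h1, h2⟩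
  · rw [h2] at h
    by_cases a : i % 2 = 0 <;> by_cases b : i ≤ j
    · simp [a, b, show (i + 1) % 2 ≠ 0 by omega, show i + 1 ≤ j by omega] at h
    · simp [a, b, show (i + 1) % 2 ≠ 0 by omega, show ¬ i + 1 ≤ j by omega] at h
    · simp [a, b, show (i + 1) % 2 = 0 by omega, show i + 1 ≤ j by omega] at h
    · simp [a, b, show (i + 1) % 2 = 0 by omega, show ¬ i + 1 ≤ j by omega] at h
  · rw [h2] at h
    simp [show i % 2 = 0 by omega, show ¬ i ≤ j by omega] at h

/-! ### An odd cycle with a bipartite graph attached -/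

/-- `H` is the part outside the cycle: a bipartite graph on the odd numbers, together with edges
joining some of its vertices to the cycle vertex `0`. The vertex `0` itself is not in `H`. -/
structure IsAttachment (H : Finset (Finset ℕ)) : Prop where
  card : ∀ t ∈ H, t.card = 1 ∨ t.card = 2
  dom : ∀ t ∈ H, ∀ v ∈ t, v = 0 ∨ (Odd v ∧ {v} ∈ H)
  odd : ∀ t ∈ H, ∃ v ∈ t, Odd v
  col : ∃ f, IsColoring f H

lemma IsAttachment.takeaway {H : Finset (Finset ℕ)} (h : IsAttachment H) (σ : Finset ℕ) :
    IsAttachment (takeawayMove H σ) where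
  card t ht := h.card t (mem_takeaway.mp ht).1
  dom t ht v hv := by
    rw [mem_takeaway] at ht ⊢
    refine (h.dom t ht.1 v hv).imp id fun hh => ⟨hh.1, hh.2, fun hs => ht.2 (hs.trans ?_)⟩
    exact Finset.singleton_subset_iff.mpr hv
  odd t ht := h.odd t (mem_takeaway.mp ht).1
  col := let ⟨f, hf⟩ := h.col; ⟨f, hf.takeaway σ⟩

lemma IsAttachment.disjoint {H : Finset (Finset ℕ)} (h : IsAttachment H) (c : ℕ) :
    Disjoint (cyc c) H := by
  rw [Finset.disjoint_left]
  intro t ht htH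
  obtain ⟨v, hv, hvo⟩ := h.odd t htH
  exact even_of_mem_cyc ht hv hvo

lemma IsAttachment.isGraph {H : Finset (Finset ℕ)} (h : IsAttachment H) {c : ℕ} (hc : 3 ≤ c) :
    IsGraph (cyc c ∪ H) where
  card t ht := by
    rcases Finset.mem_union.mp ht with ht | ht
    · rcases mem_cyc.mp ht with ⟨i, hi, rfl⟩ | ⟨i, hi, rfl⟩
      · simp
      · exact Or.inr (card_cycEdge hc hi)
    · exact h.card t ht
  closed t ht v hv := by
    rcases Finset.mem_union.mp ht with ht | ht
    · refine Finset.mem_union_left _ (mem_cyc.mpr (Or.inl ?_))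
      rcases mem_cyc.mp ht with ⟨i, hi, rfl⟩ | ⟨i, hi, rfl⟩
      · exact ⟨i, hi, by simpa using hv⟩
      · rcases mem_cycEdge.mp hv with rfl | rfl
        · exact ⟨i, hi, rfl⟩
        · exact ⟨_, Nat.mod_lt _ (by omega), rfl⟩
    · rcases h.dom t ht v hv with rfl | hh
      · exact Finset.mem_union_left _ (mem_cyc.mpr (Or.inl ⟨0, by omega, by simp⟩))
      · exact Finset.mem_union_right _ hh.2

/-- Any move on the odd cycle leaves a bipartite graph: the colouring of the cut cycle is, after
swapping colours if necessary, compatible at `0` with a colouring of `H`. -/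
lemma exists_coloring_takeaway {H : Finset (Finset ℕ)} (h : IsAttachment H) {c : ℕ}
    (hodd : Odd c) {σ : Finset ℕ} (hσ : σ ∈ cyc c) :
    ∃ f, IsColoring f (takeawayMove (cyc c ∪ H) σ) := by
  obtain ⟨j, hj, hsub⟩ : ∃ j < c, σ ⊆ cycEdge c j := by
    rcases mem_cyc.mp hσ with ⟨j, hj, rfl⟩ | ⟨j, hj, rfl⟩
    · exact ⟨j, hj, by simp [cycEdge]⟩
    · exact ⟨j, hj, subset_rfl⟩
  obtain ⟨g, hg⟩ := h.col
  let f : ℕ → Bool := fun v =>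
    if Odd v then g v else xor (cutColor j (v / 2)) (xor (cutColor j 0) (g 0))
  have f0 : f 0 = g 0 := by simp [f]
  refine ⟨f, ?_⟩
  intro u v huv ht
  obtain ⟨ht, hnot⟩ := mem_takeaway.mp ht
  rcases Finset.mem_union.mp ht with ht | ht
  · rcases mem_cyc.mp ht with ⟨i, hi, he⟩ | ⟨i, hi, he⟩
    · have := congrArg Finset.card he
      rw [Finset.card_pair huv] at this
      simp at this
    · have hij : i ≠ j := by
        rintro rfl
        exact hnot (he ▸ hsub)
      have hne := cutColor_ne hodd hi hj hij
      have hu : u ∈ cycEdge c i := by rw [← he]; simp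
      have hv : v ∈ cycEdge c i := by rw [← he]; simp
      rw [mem_cycEdge] at hu hv
      have hfe : ∀ x, f (2 * x) = xor (cutColor j x) (xor (cutColor j 0) (g 0)) := by
        intro x
        simp [f]
      rcases hu with rfl | rfl <;> rcases hv with rfl | rfl
      · exact absurd rfl huv
      · rw [hfe, hfe]
        simpa using hne
      · rw [hfe, hfe]
        simpa using hne.symm
      · exact absurd rfl huv
  · have hfg : ∀ x ∈ ({u, v} : Finset ℕ), f x = g x := by
      intro x hx
      rcases h.dom _ ht x hx with rfl | hh
      · exact f0
      · simp [f, hh.1]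
    rw [hfg u (by simp), hfg v (by simp)]
    exact hg u v huv ht

lemma grundy_takeaway_cyc {H : Finset (Finset ℕ)} (h : IsAttachment H) {c : ℕ} (hc : 3 ≤ c)
    (hodd : Odd c) {σ : Finset ℕ} (hσ : σ ∈ cyc c) :
    grundy (takeawayMove (cyc c ∪ H) σ) = parityValue
      (numFaces 1 (takeawayMove (cyc c ∪ H) σ)) (numFaces 2 (takeawayMove (cyc c ∪ H) σ)) := by
  obtain ⟨f, hf⟩ := exists_coloring_takeaway h hodd hσ
  exact grundy_eq_of_bipartite ((h.isGraph hc).takeaway σ) hf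

/-- The nim-values of the options that arise from moves on the cycle: deleting a cycle edge, a
cycle vertex other than `0`, and the vertex `0`. -/
noncomputable def cycleOptionValues (H : Finset (Finset ℕ)) : Finset ℕ :=
  {parityValue (numFaces 1 H + 1) (numFaces 2 H), parityValue (numFaces 1 H) (numFaces 2 H + 1),
    parityValue (numFaces 1 H) (numFaces 2 H + 1 + numAbove 2 H {0})}

lemma image_cyc {H : Finset (Finset ℕ)} (h : IsAttachment H) {c : ℕ} (hc : 3 ≤ c)
    (hodd : Odd c) :
    (cyc c).image (fun σ => grundy (takeawayMove (cyc c ∪ H) σ)) = cycleOptionValues H := by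
  have hdis := h.disjoint c
  have hodd' := Nat.odd_iff.mp hodd
  have hV := numFaces_union (d := 1) hdis
  have hE := numFaces_union (d := 2) hdis
  rw [numFaces_one_cyc hc] at hV
  rw [numFaces_two_cyc hc] at hE
  have hedge : ∀ i < c, grundy (takeawayMove (cyc c ∪ H) (cycEdge c i)) =
      parityValue (numFaces 1 H + 1) (numFaces 2 H) := by
    intro i hi
    have hm : cycEdge c i ∈ cyc c := mem_cyc.mpr (Or.inr ⟨i, hi, rfl⟩)
    have h2 := card_cycEdge hc hi
    have e1 := numFaces_takeaway 1 (cyc c ∪ H) (cycEdge c i)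
    have e2 := numFaces_takeaway 2 (cyc c ∪ H) (cycEdge c i)
    have e3 := numAbove_self (Finset.mem_union_left H hm)
    rw [h2] at e3
    rw [numAbove_of_lt (by omega)] at e1
    rw [grundy_takeaway_cyc h hc hodd hm]
    unfold parityValue
    omega
  have hvert : ∀ i < c, grundy (takeawayMove (cyc c ∪ H) {2 * i}) =
      parityValue (numFaces 1 H) (numFaces 2 H + 1 + numAbove 2 H {2 * i}) := by
    intro i hi
    have hm : {2 * i} ∈ cyc c := mem_cyc.mpr (Or.inl ⟨i, hi, rfl⟩)
    have e1 := numFaces_takeaway 1 (cyc c ∪ H) {2 * i}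
    have e2 := numFaces_takeaway 2 (cyc c ∪ H) {2 * i}
    have e3 := numAbove_self (Finset.mem_union_left H hm)
    have e4 := numAbove_union (d := 2) {2 * i} hdis
    rw [degree_cyc hc hi] at e4
    rw [Finset.card_singleton] at e3
    rw [grundy_takeaway_cyc h hc hodd hm]
    unfold parityValue
    omega
  have hdeg : ∀ i, i ≠ 0 → numAbove 2 H {2 * i} = 0 := by
    intro i hi
    unfold numAbove
    rw [Finset.card_eq_zero, Finset.filter_eq_empty_iff]
    rintro t ht ⟨_, hs⟩
    rw [Finset.singleton_subset_iff] at hs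
    rcases h.dom t ht _ hs with h0 | ⟨ho, _⟩
    · omega
    · rw [Nat.odd_iff] at ho
      omega
  ext n
  simp only [Finset.mem_image, cycleOptionValues, Finset.mem_insert, Finset.mem_singleton]
  constructor
  · rintro ⟨σ, hσ, rfl⟩
    rcases mem_cyc.mp hσ with ⟨i, hi, rfl⟩ | ⟨i, hi, rfl⟩
    · rw [hvert i hi]
      by_cases h0 : i = 0
      · subst h0
        exact Or.inr (Or.inr rfl)
      · rw [hdeg i h0]
        exact Or.inr (Or.inl rfl)
    · exact Or.inl (hedge i hi)
  · rintro (rfl | rfl | rfl)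
    · exact ⟨_, mem_cyc.mpr (Or.inr ⟨0, by omega, rfl⟩), hedge 0 (by omega)⟩
    · refine ⟨_, mem_cyc.mpr (Or.inl ⟨1, by omega, rfl⟩), ?_⟩
      rw [hvert 1 (by omega), hdeg 1 one_ne_zero, add_zero]
    · exact ⟨_, mem_cyc.mpr (Or.inl ⟨0, by omega, rfl⟩), hvert 0 (by omega)⟩

lemma takeaway_attachment {H : Finset (Finset ℕ)} (h : IsAttachment H) (c : ℕ) {σ : Finset ℕ}
    (hσ : σ ∈ H) : takeawayMove (cyc c ∪ H) σ = cyc c ∪ takeawayMove H σ := by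
  obtain ⟨v, hv, hvo⟩ := h.odd σ hσ
  ext t
  simp only [mem_takeaway, Finset.mem_union]
  have : t ∈ cyc c → ¬ σ ⊆ t := fun ht hs => even_of_mem_cyc ht (hs hv) hvo
  tauto

lemma grundy_cyc_union_eq {H : Finset (Finset ℕ)} (h : IsAttachment H) {c : ℕ} (hc : 3 ≤ c)
    (hodd : Odd c) : grundy (cyc c ∪ H) =
      mex (cycleOptionValues H ∪ H.image (fun σ => grundy (cyc c ∪ takeawayMove H σ))) := by
  rw [grundy_eq, Finset.image_union, image_cyc h hc hodd]
  congr 2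
  apply Finset.image_congr
  intro σ hσ
  simp only [takeaway_attachment h c hσ]

theorem grundy_cyc_union {H : Finset (Finset ℕ)} (h : IsAttachment H) {c c' : ℕ} (hc : 3 ≤ c)
    (hodd : Odd c) (hc' : 3 ≤ c') (hodd' : Odd c') :
    grundy (cyc c ∪ H) = grundy (cyc c' ∪ H) := by
  induction hn : H.card using Nat.strong_induction_on generalizing H with
  | _ n ih =>
    subst hn
    rw [grundy_cyc_union_eq h hc hodd, grundy_cyc_union_eq h hc' hodd']
    congr 2
    apply Finset.image_congr
    intro σ hσ
    exact ih _ (card_takeaway_lt hσ) (h.takeaway σ) rfl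

/-! ### The graphs `G_{m,k}` -/

/-- The relabelling that sends the cycle vertices `i < c` to even numbers and the remaining
vertices to odd numbers. -/
noncomputable def splitLabel (c : ℕ) : ℕ ↪ ℕ where
  toFun i := if i < c then 2 * i else 2 * (i - c) + 1
  inj' i j h := by
    simp only at h
    split_ifs at h <;> omega

lemma splitLabel_of_lt {c i : ℕ} (h : i < c) : splitLabel c i = 2 * i := by
  change (if i < c then 2 * i else 2 * (i - c) + 1) = _
  simp [h]

lemma splitLabel_add (c i : ℕ) : splitLabel c (c + i) = 2 * i + 1 := by
  change (if c + i < c then 2 * (c + i) else 2 * (c + i - c) + 1) = _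
  simp

/-- The part of `G_{m,k}` outside the cycle: `B` becomes `1`, the `m`-tail `3, 5, …, 2 m + 1` and
the `k`-tail `2 m + 3, …, 2 (m + k) + 1`. -/
noncomputable def tails (m k : ℕ) : Finset (Finset ℕ) :=
  ((Finset.range (1 + m + k)).image (fun i => ({2 * i + 1} : Finset ℕ))) ∪
    ({({0, 1} : Finset ℕ)} : Finset (Finset ℕ)) ∪
    ((Finset.range m).image (fun i => ({2 * i + 1, 2 * (i + 1) + 1} : Finset ℕ))) ∪
    ((Finset.range k).image (fun i =>
      ({if i = 0 then 1 else 2 * (m + i) + 1, 2 * (m + i + 1) + 1} : Finset ℕ)))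

lemma mem_tails {m k : ℕ} {t : Finset ℕ} : t ∈ tails m k ↔
    (∃ i < 1 + m + k, t = {2 * i + 1}) ∨ t = {0, 1} ∨
    (∃ i < m, t = {2 * i + 1, 2 * (i + 1) + 1}) ∨
    (∃ i < k, t = {if i = 0 then 1 else 2 * (m + i) + 1, 2 * (m + i + 1) + 1}) := by
  simp only [tails, Finset.mem_union, Finset.mem_image, Finset.mem_range, Finset.mem_singleton,
    or_assoc, eq_comm]

lemma rename_Gmk {c : ℕ} (hc : 3 ≤ c) (m k : ℕ) :
    renameVertices (splitLabel c) (Gmk c m k) = cyc c ∪ tails m k := by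
  have hB : splitLabel c c = 1 := splitLabel_add c 0
  have h0 : splitLabel c 0 = 0 := splitLabel_of_lt (by omega)
  have hcyc : ∀ i < c, Finset.map (splitLabel c) {i, (i + 1) % c} = cycEdge c i := by
    intro i hi
    rw [Finset.map_insert, Finset.map_singleton, splitLabel_of_lt hi,
      splitLabel_of_lt (Nat.mod_lt _ (by omega)), cycEdge]
  have hAB : Finset.map (splitLabel c) {0, c} = {0, 1} := by
    rw [Finset.map_insert, Finset.map_singleton, h0, hB]
  have hm : ∀ i, Finset.map (splitLabel c) {c + i, c + i + 1} =
      {2 * i + 1, 2 * (i + 1) + 1} := by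
    intro i
    rw [Finset.map_insert, Finset.map_singleton, splitLabel_add, add_assoc, splitLabel_add]
  have hk : ∀ i, Finset.map (splitLabel c) {if i = 0 then c else c + m + i, c + m + i + 1} =
      {if i = 0 then 1 else 2 * (m + i) + 1, 2 * (m + i + 1) + 1} := by
    intro i
    rw [Finset.map_insert, Finset.map_singleton, show c + m + i + 1 = c + (m + i + 1) by ring,
      splitLabel_add, apply_ite (splitLabel c), hB, add_assoc c m i, splitLabel_add]
  ext t
  simp only [renameVertices, Gmk, Finset.mem_image, Finset.mem_union, Finset.mem_range,
    Finset.mem_singleton, mem_cyc, mem_tails]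
  constructor
  · rintro ⟨a, ((((⟨i, hi, rfl⟩ | ⟨i, hi, rfl⟩) | rfl) | ⟨i, hi, rfl⟩) | ⟨i, hi, rfl⟩), rfl⟩
    · rw [Finset.map_singleton]
      rcases Nat.lt_or_ge i c with h | h
      · exact Or.inl (Or.inl ⟨i, h, by rw [splitLabel_of_lt h]⟩)
      · obtain ⟨d, rfl⟩ := Nat.exists_eq_add_of_le h
        exact Or.inr (Or.inl ⟨d, by omega, by rw [splitLabel_add]⟩)
    · exact Or.inl (Or.inr ⟨i, hi, hcyc i hi⟩)
    · exact Or.inr (Or.inr (Or.inl hAB))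
    · exact Or.inr (Or.inr (Or.inr (Or.inl ⟨i, hi, hm i⟩)))
    · exact Or.inr (Or.inr (Or.inr (Or.inr ⟨i, hi, hk i⟩)))
  · rintro ((⟨i, hi, rfl⟩ | ⟨i, hi, rfl⟩) | (⟨i, hi, rfl⟩ | rfl | ⟨i, hi, rfl⟩ | ⟨i, hi, rfl⟩))
    · exact ⟨{i}, Or.inl (Or.inl (Or.inl (Or.inl ⟨i, by omega, rfl⟩))), by
        rw [Finset.map_singleton, splitLabel_of_lt hi]⟩
    · exact ⟨_, Or.inl (Or.inl (Or.inl (Or.inr ⟨i, hi, rfl⟩))), hcyc i hi⟩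
    · exact ⟨{c + i}, Or.inl (Or.inl (Or.inl (Or.inl ⟨c + i, by omega, rfl⟩))), by
        rw [Finset.map_singleton, splitLabel_add]⟩
    · exact ⟨_, Or.inl (Or.inl (Or.inr rfl)), hAB⟩
    · exact ⟨_, Or.inl (Or.inr ⟨i, hi, rfl⟩), hm i⟩
    · exact ⟨_, Or.inr ⟨i, hi, rfl⟩, hk i⟩

/-- The distance from `A`, modulo 2, is a proper colouring of the tails; the vertex `2 i + 1` has
distance `i + 1` on the `m`-tail and `i - m + 1` on the `k`-tail. -/
noncomputable def tailColor (m v : ℕ) : Bool :=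
  decide ((if v = 0 then 1 else if v / 2 ≤ m then v / 2 else v / 2 + m) % 2 = 0)

lemma isAttachment_tails (m k : ℕ) : IsAttachment (tails m k) := by
  have hv : ∀ i < 1 + m + k, Odd (2 * i + 1) ∧ {2 * i + 1} ∈ tails m k := fun i hi =>
    ⟨odd_two_mul_add_one i, mem_tails.mpr (Or.inl ⟨i, hi, rfl⟩)⟩
  refine ⟨?_, ?_, ?_, tailColor m, ?_⟩
  · intro t ht
    rcases mem_tails.mp ht with ⟨i, hi, rfl⟩ | rfl | ⟨i, hi, rfl⟩ | ⟨i, hi, rfl⟩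
    · simp
    · simp
    · exact Or.inr (Finset.card_pair (by omega))
    · exact Or.inr (Finset.card_pair (by split_ifs <;> omega))
  · intro t ht v hvt
    rcases mem_tails.mp ht with ⟨i, hi, rfl⟩ | rfl | ⟨i, hi, rfl⟩ | ⟨i, hi, rfl⟩
    · rw [Finset.mem_singleton] at hvt
      subst hvt
      exact Or.inr (hv i hi)
    · rw [Finset.mem_insert, Finset.mem_singleton] at hvt
      rcases hvt with rfl | rfl
      · exact Or.inl rfl
      · exact Or.inr (hv 0 (by omega))
    · rw [Finset.mem_insert, Finset.mem_singleton] at hvt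
      rcases hvt with rfl | rfl
      · exact Or.inr (hv i (by omega))
      · exact Or.inr (hv (i + 1) (by omega))
    · rw [Finset.mem_insert, Finset.mem_singleton] at hvt
      rcases hvt with rfl | rfl
      · split_ifs
        · exact Or.inr (hv 0 (by omega))
        · exact Or.inr (hv (m + i) (by omega))
      · exact Or.inr (hv (m + i + 1) (by omega))
  · intro t ht
    rcases mem_tails.mp ht with ⟨i, hi, rfl⟩ | rfl | ⟨i, hi, rfl⟩ | ⟨i, hi, rfl⟩
    · exact ⟨_, Finset.mem_singleton_self _, odd_two_mul_add_one i⟩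
    · exact ⟨1, by simp, odd_one⟩
    · exact ⟨2 * i + 1, by simp, odd_two_mul_add_one i⟩
    · exact ⟨2 * (m + i + 1) + 1, by simp, odd_two_mul_add_one _⟩
  · intro u v huv ht
    have main : ∀ x y : ℕ, ({u, v} : Finset ℕ) = {x, y} → tailColor m x ≠ tailColor m y →
        tailColor m u ≠ tailColor m v := by
      intro x y he hne
      have hu : u ∈ ({x, y} : Finset ℕ) := by rw [← he]; simp
      have hv : v ∈ ({x, y} : Finset ℕ) := by rw [← he]; simp
      rw [Finset.mem_insert, Finset.mem_singleton] at hu hv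
      rcases hu with rfl | rfl <;> rcases hv with rfl | rfl
      · exact absurd rfl huv
      · exact hne
      · exact hne.symm
      · exact absurd rfl huv
    rcases mem_tails.mp ht with ⟨i, hi, he⟩ | he | ⟨i, hi, he⟩ | ⟨i, hi, he⟩
    · have := congrArg Finset.card he
      rw [Finset.card_pair huv] at this
      simp at this
    · refine main _ _ he ?_
      simp [tailColor]
    · refine main _ _ he ?_
      unfold tailColor
      rw [Ne, decide_eq_decide]
      intro hiff
      split_ifs at hiff <;> omega
    · refine main _ _ he ?_
      unfold tailColor
      rw [Ne, decide_eq_decide]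
      intro hiff
      by_cases hi0 : i = 0
      · subst hi0
        rw [if_pos rfl] at hiff
        split_ifs at hiff <;> omega
      · rw [if_neg hi0] at hiff
        split_ifs at hiff <;> omega

/-- For all `m, k ≥ 0` and all odd `c, c' ≥ 3`, the nim-value of graph
chomp on `G_{m,k}` built on a cycle of length `c` equals that of `G_{m,k}` built on a cycle
of length `c'`: the nim-value does not depend on the odd cycle length. -/
theorem grundy_Gmk_cycle_length_independent (m k c c' : ℕ)
    (hc : 3 ≤ c) (hcodd : Odd c) (hc' : 3 ≤ c') (hc'odd : Odd c') :
    grundy (Gmk c m k) = grundy (Gmk c' m k) := by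
  rw [← grundy_rename (splitLabel c), ← grundy_rename (splitLabel c') (Gmk c' m k),
    rename_Gmk hc, rename_Gmk hc']
  exact grundy_cyc_union (isAttachment_tails m k) hc hcodd hc' hc'odd
end

section
/- Let g_{m,k} denote the nim-value of graph chomp on G_{m,k} (for any fixed odd cycle length ≥ 3). Then for all integers a, b ≥ 0 and all i, j ∈ {1,2,3}: g_{3a+i,3b+j} = 4·((a XOR b) + 1) if i + j is even, and g_{3a+i,3b+j} = 4·((a XOR b) + 1) + 2 if i + j is odd, where XOR denotes bitwise exclusive-or of nonnegative integers. -/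
/-! Every position with a broken cycle is bipartite, and the nim-value of a bipartite graph is
`(V mod 2) + 2 (E mod 2)` (`grundy_bipartite`): each move changes a parity, and handshaking
supplies the moves to all smaller values. An odd cycle has value `0`, since deleting an edge or
a vertex leaves a path of value `1` or `2`.

The remaining moves in `G_{m,k}` therefore lead to a sum (`grundy_union`) of a graph `G_{p,k}`
or `G_{m,p}` with a shorter tail and a path of value `0`, `1` or `2`, or to an explicit value in
`{0, 1, 2, 3}`. This is a recursion on `(m, k)` alone, and the function `F` solves it. For
`m, k ≥ 1` the moves that break the cycle or delete `B` provide the values `0, …, 3`. Writing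
`m = 3a + i` and `k = 3b + j`, shortening the first tail to length `3a' + 1` or `3a' + 2` with
`a' < a`, and adjusting by the value of the path cut off, provides the four values
`4((a' XOR b) + 1) + r`, `r < 4`, so that the quotient by `4` behaves like the nim-sum of `a`
and `b` shifted by one; when `i + j` is odd, removing one vertex or edge from a tail with `i = 2`
or `j = 2` gives the two further values needed in the same block. With an empty tail the values
are `4` (both empty), `3` (other tail odd) and `0` (other tail even and nonempty).

All graphs occurring are encoded as `Gen par S T`: vertex set `S` and one edge `{v, par v}` for
each `v ∈ T`, for a fixed parent function `par` that runs around the cycle and points towards `B`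
and then `A` elsewhere. Moves then become deletions from `S` and `T`. -/

attribute [local instance] Classical.propDecidable

/-! ### Grundy values: characterization and sums -/

lemma mex_eq_iff (s : Finset ℕ) (n : ℕ) : mex s = n ↔ n ∉ s ∧ ∀ x < n, x ∈ s := by
  have hne : {n : ℕ | n ∉ s}.Nonempty := by
    obtain ⟨x, hx⟩ := Infinite.exists_notMem_finset s
    exact ⟨x, hx⟩
  constructor
  · rintro rfl
    refine ⟨Nat.sInf_mem hne, fun x hx => ?_⟩
    by_contra h
    exact Nat.notMem_of_lt_sInf hx h
  · rintro ⟨h1, h2⟩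
    refine le_antisymm (Nat.sInf_le h1) ?_
    by_contra h
    push Not at h
    exact Nat.sInf_mem hne (h2 _ h)

lemma grundy_eq_iff (Δ : Finset (Finset ℕ)) (n : ℕ) :
    grundy Δ = n ↔ (∀ σ ∈ Δ, grundy (takeawayMove Δ σ) ≠ n) ∧
      ∀ x < n, ∃ σ ∈ Δ, grundy (takeawayMove Δ σ) = x := by
  rw [grundy, mex_eq_iff]
  simp

lemma mem_takeawayMove (Δ : Finset (Finset ℕ)) (σ t : Finset ℕ) :
    t ∈ takeawayMove Δ σ ↔ t ∈ Δ ∧ ¬ σ ⊆ t := by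
  simp [takeawayMove]

lemma card_takeawayMove_lt {Δ : Finset (Finset ℕ)} {σ : Finset ℕ} (h : σ ∈ Δ) :
    (takeawayMove Δ σ).card < Δ.card := by
  apply Finset.card_lt_card
  refine ⟨fun t ht => ((mem_takeawayMove _ _ _).1 ht).1, fun hs => ?_⟩
  exact ((mem_takeawayMove _ _ _).1 (hs h)).2 subset_rfl

lemma takeawayMove_union_left {Δ₁ Δ₂ : Finset (Finset ℕ)} {σ : Finset ℕ}
    (h : ∀ τ ∈ Δ₂, ¬ σ ⊆ τ) :
    takeawayMove (Δ₁ ∪ Δ₂) σ = takeawayMove Δ₁ σ ∪ Δ₂ := by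
  ext t
  simp only [mem_takeawayMove, Finset.mem_union]
  have := h t
  tauto

lemma takeawayMove_union_right {Δ₁ Δ₂ : Finset (Finset ℕ)} {σ : Finset ℕ}
    (h : ∀ τ ∈ Δ₁, ¬ σ ⊆ τ) :
    takeawayMove (Δ₁ ∪ Δ₂) σ = Δ₁ ∪ takeawayMove Δ₂ σ := by
  rw [Finset.union_comm, takeawayMove_union_left h, Finset.union_comm]

/-- The Sprague–Grundy sum rule: if no face of one complex is comparable with a face of the
other, then no move in one affects the other. -/
lemma grundy_union (Δ₁ Δ₂ : Finset (Finset ℕ))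
    (h : ∀ σ ∈ Δ₁, ∀ τ ∈ Δ₂, ¬ σ ⊆ τ ∧ ¬ τ ⊆ σ) :
    grundy (Δ₁ ∪ Δ₂) = grundy Δ₁ ^^^ grundy Δ₂ := by
  induction hn : Δ₁.card + Δ₂.card using Nat.strong_induction_on generalizing Δ₁ Δ₂ with
  | _ n ih =>
  have left : ∀ σ ∈ Δ₁, grundy (takeawayMove (Δ₁ ∪ Δ₂) σ) =
      grundy (takeawayMove Δ₁ σ) ^^^ grundy Δ₂ := by
    intro σ hσ
    rw [takeawayMove_union_left (fun τ hτ => (h σ hσ τ hτ).1)]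
    have := card_takeawayMove_lt hσ
    exact ih _ (by omega) _ _
      (fun σ' hσ' τ hτ => h σ' ((mem_takeawayMove _ _ _).1 hσ').1 τ hτ) rfl
  have right : ∀ τ ∈ Δ₂, grundy (takeawayMove (Δ₁ ∪ Δ₂) τ) =
      grundy Δ₁ ^^^ grundy (takeawayMove Δ₂ τ) := by
    intro τ hτ
    rw [takeawayMove_union_right (fun σ hσ => (h σ hσ τ hτ).2)]
    have := card_takeawayMove_lt hτ
    exact ih _ (by omega) _ _
      (fun σ hσ τ' hτ' => h σ hσ τ' ((mem_takeawayMove _ _ _).1 hτ').1) rfl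
  obtain ⟨n1, r1⟩ := (grundy_eq_iff Δ₁ _).1 rfl
  obtain ⟨n2, r2⟩ := (grundy_eq_iff Δ₂ _).1 rfl
  rw [grundy_eq_iff]
  refine ⟨fun σ hσ => ?_, fun x hx => ?_⟩
  · rcases Finset.mem_union.1 hσ with hσ | hσ
    · rw [left σ hσ]
      exact fun e => n1 σ hσ (Nat.xor_left_injective e)
    · rw [right σ hσ]
      exact fun e => n2 σ hσ (Nat.xor_right_injective e)
  · rcases Nat.lt_xor_cases hx with hx | hx
    · obtain ⟨σ, hσ, e⟩ := r1 _ hx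
      refine ⟨σ, Finset.mem_union_left _ hσ, ?_⟩
      rw [left σ hσ, e, Nat.xor_assoc, Nat.xor_self, Nat.xor_zero]
    · obtain ⟨σ, hσ, e⟩ := r2 _ hx
      refine ⟨σ, Finset.mem_union_right _ hσ, ?_⟩
      rw [right σ hσ, e, Nat.xor_comm x, ← Nat.xor_assoc, Nat.xor_self, Nat.zero_xor]

/-! ### Graphs given by a parent function -/

/-- The complex with vertex set `S` and, for each `v ∈ T`, the edge joining `v` to `par v`. -/
noncomputable def Gen (par : ℕ → ℕ) (S T : Finset ℕ) : Finset (Finset ℕ) :=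
  S.image (fun v => ({v} : Finset ℕ)) ∪ T.image (fun v => ({v, par v} : Finset ℕ))

/-- The pair `(S, T)` describes a graph: both ends of every edge are vertices. -/
def Good (par : ℕ → ℕ) (S T : Finset ℕ) : Prop := ∀ v ∈ T, v ∈ S ∧ par v ∈ S

/-- The edge labels that survive the deletion of the vertex `w`. -/
noncomputable def del (par : ℕ → ℕ) (T : Finset ℕ) (w : ℕ) : Finset ℕ :=
  T.filter (fun v => v ≠ w ∧ par v ≠ w)

/-- A parent function without fixed points and 2-cycles: `v ↦ {v, par v}` then labels
pairwise distinct genuine edges. -/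
def Proper (par : ℕ → ℕ) : Prop := ∀ v, par v ≠ v ∧ par (par v) ≠ v

section
variable {par : ℕ → ℕ} {S T : Finset ℕ}

lemma mem_Gen {σ : Finset ℕ} :
    σ ∈ Gen par S T ↔ (∃ v ∈ S, {v} = σ) ∨ ∃ v ∈ T, {v, par v} = σ := by
  simp [Gen]

lemma mem_del {v w : ℕ} : v ∈ del par T w ↔ v ∈ T ∧ v ≠ w ∧ par v ≠ w := by
  simp [del]

lemma Good.del (h : Good par S T) (w : ℕ) : Good par (S.erase w) (del par T w) := by
  intro v hv
  obtain ⟨h1, h2, h3⟩ := mem_del.1 hv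
  exact ⟨Finset.mem_erase.2 ⟨h2, (h v h1).1⟩, Finset.mem_erase.2 ⟨h3, (h v h1).2⟩⟩

lemma Good.erase (h : Good par S T) (w : ℕ) : Good par S (T.erase w) :=
  fun v hv => h v (Finset.mem_of_mem_erase hv)

lemma move_vertex (w : ℕ) :
    takeawayMove (Gen par S T) {w} = Gen par (S.erase w) (del par T w) := by
  ext t
  simp only [mem_takeawayMove, mem_Gen, Finset.singleton_subset_iff, Finset.mem_erase, mem_del]
  constructor
  · rintro ⟨⟨v, hv, rfl⟩ | ⟨v, hv, rfl⟩, h⟩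
    · left; exact ⟨v, ⟨by simpa [eq_comm] using h, hv⟩, rfl⟩
    · right; simp only [Finset.mem_insert, Finset.mem_singleton, not_or] at h
      exact ⟨v, ⟨hv, fun e => h.1 e.symm, fun e => h.2 e.symm⟩, rfl⟩
  · rintro (⟨v, ⟨hv, hv'⟩, rfl⟩ | ⟨v, ⟨hv, h1, h2⟩, rfl⟩)
    · exact ⟨Or.inl ⟨v, hv', rfl⟩, by simpa [eq_comm] using hv⟩
    · refine ⟨Or.inr ⟨v, hv, rfl⟩, ?_⟩
      simp only [Finset.mem_insert, Finset.mem_singleton, not_or]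
      exact ⟨fun e => h1 e.symm, fun e => h2 e.symm⟩

lemma edge_subset_edge (hp : Proper par) {u v : ℕ}
    (h : ({u, par u} : Finset ℕ) ⊆ {v, par v}) : u = v := by
  have h1 : u ∈ ({v, par v} : Finset ℕ) := h (by simp)
  have h2 : par u ∈ ({v, par v} : Finset ℕ) := h (by simp)
  simp only [Finset.mem_insert, Finset.mem_singleton] at h1 h2
  rcases h1 with h1 | h1
  · exact h1
  · rcases h2 with h2 | h2
    · exact absurd (h1 ▸ h2) (hp v).2
    · exact absurd (h2.trans h1.symm) (hp u).1

lemma move_edge (hp : Proper par) (w : ℕ) :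
    takeawayMove (Gen par S T) {w, par w} = Gen par S (T.erase w) := by
  ext t
  simp only [mem_takeawayMove, mem_Gen, Finset.mem_erase]
  constructor
  · rintro ⟨⟨v, hv, rfl⟩ | ⟨v, hv, rfl⟩, h⟩
    · left; exact ⟨v, hv, rfl⟩
    · right; exact ⟨v, ⟨by rintro rfl; exact h subset_rfl, hv⟩, rfl⟩
  · rintro (⟨v, hv, rfl⟩ | ⟨v, ⟨h1, hv⟩, rfl⟩)
    · refine ⟨Or.inl ⟨v, hv, rfl⟩, fun h => (hp w).1 ?_⟩
      have h1 : w ∈ ({v} : Finset ℕ) := h (by simp)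
      have h2 : par w ∈ ({v} : Finset ℕ) := h (by simp)
      simp only [Finset.mem_singleton] at h1 h2
      rw [h2, h1]
    · exact ⟨Or.inr ⟨v, hv, rfl⟩, fun h => h1 (edge_subset_edge hp h).symm⟩

/-- The recursion for Grundy values, read off from vertex and edge labels. -/
lemma grundy_Gen_iff (hp : Proper par) (S T : Finset ℕ) (n : ℕ) :
    grundy (Gen par S T) = n ↔
      (∀ w ∈ S, grundy (Gen par (S.erase w) (del par T w)) ≠ n) ∧
      (∀ v ∈ T, grundy (Gen par S (T.erase v)) ≠ n) ∧
      ∀ x < n, (∃ w ∈ S, grundy (Gen par (S.erase w) (del par T w)) = x) ∨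
        ∃ v ∈ T, grundy (Gen par S (T.erase v)) = x := by
  rw [grundy_eq_iff]
  simp only [mem_Gen]
  constructor
  · rintro ⟨h1, h2⟩
    refine ⟨fun w hw => ?_, fun v hv => ?_, fun x hx => ?_⟩
    · rw [← move_vertex]; exact h1 _ (Or.inl ⟨w, hw, rfl⟩)
    · rw [← move_edge hp]; exact h1 _ (Or.inr ⟨v, hv, rfl⟩)
    · obtain ⟨σ, ⟨v, hv, rfl⟩ | ⟨v, hv, rfl⟩, e⟩ := h2 x hx
      · left; exact ⟨v, hv, by rw [← move_vertex, e]⟩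
      · right; exact ⟨v, hv, by rw [← move_edge hp, e]⟩
  · rintro ⟨h1, h2, h3⟩
    refine ⟨?_, fun x hx => ?_⟩
    · rintro σ (⟨v, hv, rfl⟩ | ⟨v, hv, rfl⟩)
      · rw [move_vertex]; exact h1 v hv
      · rw [move_edge hp]; exact h2 v hv
    · rcases h3 x hx with ⟨v, hv, e⟩ | ⟨v, hv, e⟩
      · exact ⟨_, Or.inl ⟨v, hv, rfl⟩, by rw [move_vertex, e]⟩
      · exact ⟨_, Or.inr ⟨v, hv, rfl⟩, by rw [move_edge hp, e]⟩

/-- Vertex-disjoint graphs add up under XOR. -/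
lemma grundy_Gen_union {S₁ S₂ T₁ T₂ : Finset ℕ} (h1 : Good par S₁ T₁) (h2 : Good par S₂ T₂)
    (hd : Disjoint S₁ S₂) :
    grundy (Gen par (S₁ ∪ S₂) (T₁ ∪ T₂)) =
      grundy (Gen par S₁ T₁) ^^^ grundy (Gen par S₂ T₂) := by
  have key : ∀ {S T : Finset ℕ}, Good par S T → ∀ σ ∈ Gen par S T, σ.Nonempty ∧ σ ⊆ S := by
    intro S T h σ hσ
    rcases mem_Gen.1 hσ with ⟨v, hv, rfl⟩ | ⟨v, hv, rfl⟩
    · simpa using hv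
    · refine ⟨by simp, ?_⟩
      intro x hx
      simp only [Finset.mem_insert, Finset.mem_singleton] at hx
      rcases hx with rfl | rfl
      exacts [(h _ hv).1, (h _ hv).2]
  rw [← grundy_union]
  · congr 1
    simp only [Gen, Finset.image_union]
    ext; simp only [Finset.mem_union]; tauto
  · intro σ hσ τ hτ
    obtain ⟨⟨x, hx⟩, hσS⟩ := key h1 σ hσ
    obtain ⟨⟨y, hy⟩, hτS⟩ := key h2 τ hτ
    exact ⟨fun h => Finset.disjoint_left.1 hd (hσS hx) (hτS (h hx)),
      fun h => Finset.disjoint_left.1 hd (hσS (h hy)) (hτS hy)⟩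

/-! ### Bipartite graphs -/

/-- The degree of `w`. -/
noncomputable def dg (par : ℕ → ℕ) (T : Finset ℕ) (w : ℕ) : ℕ :=
  (T.filter (fun v => v = w ∨ par v = w)).card

lemma card_del (T : Finset ℕ) (w : ℕ) : (del par T w).card + dg par T w = T.card := by
  rw [dg, del, add_comm]
  have := Finset.card_filter_add_card_filter_not (s := T) (fun v => v = w ∨ par v = w)
  simp only [not_or] at this
  convert this using 2

lemma sum_dg (U : Finset ℕ) :
    ∑ w ∈ U, dg par T w = ∑ v ∈ T, (U.filter (fun w => v = w ∨ par v = w)).card := by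
  simpa [dg, Finset.bipartiteBelow, Finset.bipartiteAbove] using
    (Finset.sum_card_bipartiteAbove_eq_sum_card_bipartiteBelow (s := T) (t := U)
      (fun v w => v = w ∨ par v = w)).symm

lemma exists_even_dg (hp : Proper par) (hg : Good par S T) (hS : S.card % 2 = 1) :
    ∃ w ∈ S, dg par T w % 2 = 0 := by
  by_contra! h
  have h1 : ∑ w ∈ S, dg par T w = ∑ v ∈ T, 2 := by
    rw [sum_dg]
    refine Finset.sum_congr rfl fun v hv => ?_
    have : S.filter (fun w => v = w ∨ par v = w) = {v, par v} := by
      ext w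
      simp only [Finset.mem_filter, Finset.mem_insert, Finset.mem_singleton]
      have := hg v hv
      grind
    rw [this, Finset.card_pair (hp v).1.symm]
  have h2 : (∑ w ∈ S, dg par T w) % 2 = S.card % 2 := by
    rw [Finset.sum_nat_mod, Finset.sum_congr rfl
      (fun w hw => (by have := h w hw; omega : dg par T w % 2 = 1))]
    simp
  rw [h1, Finset.sum_const, smul_eq_mul] at h2
  omega

lemma exists_odd_dg (hg : Good par S T) (col : ℕ → Bool)
    (hc : ∀ v ∈ T, col v ≠ col (par v)) (hT : T.card % 2 = 1) :
    ∃ w ∈ S, dg par T w % 2 = 1 := by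
  by_contra! h
  have h1 : ∑ w ∈ S.filter (fun w => col w = true), dg par T w = ∑ v ∈ T, 1 := by
    rw [sum_dg]
    refine Finset.sum_congr rfl fun v hv => ?_
    rw [Finset.card_eq_one]
    have h0 := hg v hv
    have h3 := hc v hv
    -- the end of the edge that is coloured `true`
    refine ⟨if col v then v else par v, ?_⟩
    ext w
    simp only [Finset.mem_filter, Finset.mem_singleton]
    cases hv1 : col v <;> cases hv2 : col (par v) <;> simp [hv1, hv2] at h3 ⊢ <;> grind
  have h2 : (∑ w ∈ S.filter (fun w => col w = true), dg par T w) % 2 = 0 := by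
    rw [Finset.sum_nat_mod, Finset.sum_congr rfl
      (fun w hw => (by
        have := h w (Finset.mem_filter.1 hw).1
        omega : dg par T w % 2 = 0))]
    simp
  rw [h1] at h2
  simp at h2
  omega

/-- On a bipartite graph the Grundy value only depends on the parities of the numbers of
vertices and edges. Each move changes one of these parities; the moves to the smaller values
exist because the vertices of odd degree are even in number, and because a bipartite graph with
an odd number of edges has a vertex of odd degree. -/
lemma grundy_bipartite (hp : Proper par) (S T : Finset ℕ) (hg : Good par S T) (col : ℕ → Bool)
    (hc : ∀ v ∈ T, col v ≠ col (par v)) :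
    grundy (Gen par S T) = S.card % 2 + 2 * (T.card % 2) := by
  induction hn : S.card + T.card using Nat.strong_induction_on generalizing S T with
  | _ n ih =>
  have hV : ∀ w ∈ S, ∃ s t, s + 1 = S.card ∧ t + dg par T w = T.card ∧
      grundy (Gen par (S.erase w) (del par T w)) = s % 2 + 2 * (t % 2) := by
    intro w hw
    have e1 := Finset.card_erase_add_one hw
    have e2 := card_del (par := par) T w
    exact ⟨_, _, e1, e2, ih _ (by omega) _ _ (hg.del w) (fun v hv => hc v (mem_del.1 hv).1) rfl⟩
  have hE : ∀ v ∈ T, ∃ t, t + 1 = T.card ∧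
      grundy (Gen par S (T.erase v)) = S.card % 2 + 2 * (t % 2) := by
    intro v hv
    have e1 := Finset.card_erase_add_one hv
    exact ⟨_, e1, ih _ (by omega) _ _ (hg.erase v)
      (fun u hu => hc u (Finset.mem_of_mem_erase hu)) rfl⟩
  rw [grundy_Gen_iff hp]
  refine ⟨fun w hw => ?_, fun v hv => ?_, fun x hx => ?_⟩
  · obtain ⟨s, t, h1, h2, h3⟩ := hV w hw
    omega
  · obtain ⟨t, h1, h3⟩ := hE v hv
    omega
  · have even : S.card % 2 = 1 → ∃ w ∈ S,
        grundy (Gen par (S.erase w) (del par T w)) = 2 * (T.card % 2) := by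
      intro h
      obtain ⟨w, hw, hd⟩ := exists_even_dg hp hg h
      obtain ⟨s, t, h1, h2, h3⟩ := hV w hw
      exact ⟨w, hw, by omega⟩
    have odd : T.card % 2 = 1 → ∃ w ∈ S,
        grundy (Gen par (S.erase w) (del par T w)) = 1 - S.card % 2 := by
      intro h
      obtain ⟨w, hw, hd⟩ := exists_odd_dg hg col hc h
      obtain ⟨s, t, h1, h2, h3⟩ := hV w hw
      exact ⟨w, hw, by omega⟩
    have edge : T.card % 2 = 1 → ∃ v ∈ T, grundy (Gen par S (T.erase v)) = S.card % 2 := by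
      intro h
      obtain ⟨v, hv⟩ : T.Nonempty := Finset.card_pos.1 (by omega)
      obtain ⟨t, h1, h3⟩ := hE v hv
      exact ⟨v, hv, by omega⟩
    rcases Nat.mod_two_eq_zero_or_one T.card with hT | hT <;>
    rcases Nat.mod_two_eq_zero_or_one S.card with hS | hS <;>
    simp only [hT, hS] at hx even odd edge <;> simp at even odd edge hx
    · subst hx; exact Or.inl even
    · interval_cases x
      exacts [Or.inr edge, Or.inl odd]
    · interval_cases x
      exacts [Or.inl odd, Or.inr edge, Or.inl even]

end

/-! ### Arithmetic of the claimed values -/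

/-- The Grundy value of a path with `t` vertices. -/
def pathVal (t : ℕ) : ℕ := if t = 0 then 0 else 2 - t % 2

/-- The Grundy value of `G_{m,k}` for all `m, k ≥ 0`, including empty tails. -/
def F (m k : ℕ) : ℕ :=
  if m = 0 then (if k = 0 then 4 else 3 * (k % 2))
  else if k = 0 then 3 * (m % 2)
  else 4 * (((m - 1) / 3 ^^^ (k - 1) / 3) + 1) + 2 * (((m - 1) % 3 + (k - 1) % 3) % 2)

/-- The values of the moves in `G_{m,k}` outside the tails: deleting a cycle edge, a cycle
vertex of degree 2, the vertex `A`, the edge `AB` (same value as for a cycle vertex of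
degree 2), or the vertex `B`. -/
def Base (m k x : ℕ) : Prop :=
  x = (m + k) % 2 + 2 * ((m + k + 1) % 2) ∨
  x = (m + k + 1) % 2 + 2 * ((m + k) % 2) ∨
  x = 3 * ((m + k + 1) % 2) ∨
  x = (m + k) % 2 + 2 * ((m - 1 + (k - 1)) % 2)

lemma F_comm (m k : ℕ) : F m k = F k m := by
  unfold F
  rw [Nat.xor_comm, Nat.add_comm ((m - 1) % 3)]
  split_ifs <;> rfl

lemma F_pos {m k : ℕ} (hm : m ≠ 0) (hk : k ≠ 0) :
    F m k = 4 * (((m - 1) / 3 ^^^ (k - 1) / 3) + 1) +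
      2 * (((m - 1) % 3 + (k - 1) % 3) % 2) := by
  simp [F, hm, hk]

lemma xor_one (x : ℕ) : x ^^^ 1 = if x % 2 = 0 then x + 1 else x - 1 := by
  have h1 := Nat.xor_div_two_pow (a := x) (b := 1) (n := 2)
  have h2 := Nat.xor_mod_two_pow (a := x) (b := 1) (n := 2)
  have h4 : x % 4 = 0 ∨ x % 4 = 1 ∨ x % 4 = 2 ∨ x % 4 = 3 := by omega
  rcases h4 with h | h | h | h <;> simp [h] at h1 h2 <;> split_ifs <;> omega

lemma xor_two (x : ℕ) : x ^^^ 2 = if x % 4 < 2 then x + 2 else x - 2 := by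
  have h1 := Nat.xor_div_two_pow (a := x) (b := 2) (n := 2)
  have h2 := Nat.xor_mod_two_pow (a := x) (b := 2) (n := 2)
  have : x % 4 < 4 := Nat.mod_lt _ (by norm_num)
  have h4 : x % 4 = 0 ∨ x % 4 = 1 ∨ x % 4 = 2 ∨ x % 4 = 3 := by omega
  rcases h4 with h | h | h | h <;> simp [h] at h1 h2 ⊢ <;> omega

lemma xor_pathVal (x t : ℕ) : x ^^^ pathVal t =
    if t = 0 then x else if t % 2 = 1 then (if x % 2 = 0 then x + 1 else x - 1)
    else (if x % 4 < 2 then x + 2 else x - 2) := by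
  unfold pathVal
  split_ifs with h1 h2 h3 h3 <;> simp_all [xor_one, xor_two]

lemma F_tail_ne {m k p t : ℕ} (hp : p < m) (ht : t = m - p - 1 ∨ t = m - p) :
    F p k ^^^ pathVal t ≠ F m k := by
  rw [xor_pathVal]
  rcases Nat.eq_zero_or_pos k with rfl | hk
  · rcases Nat.eq_zero_or_pos p with rfl | hp0
    · have e : F 0 0 = 4 := rfl
      have e' : F m 0 = 3 * (m % 2) := by simp [F]; omega
      rw [e, e']; split_ifs <;> omega
    · have e : F p 0 = 3 * (p % 2) := by simp [F]; omega
      have e' : F m 0 = 3 * (m % 2) := by simp [F]; omega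
      rw [e, e']; split_ifs <;> omega
  · rw [F_pos (m := m) (by omega) (by omega)]
    rcases Nat.eq_zero_or_pos p with rfl | hp0
    · have e : F 0 k = 3 * (k % 2) := by simp [F]; omega
      rw [e]; split_ifs <;> omega
    · rw [F_pos (by omega) (by omega)]
      by_cases hq : (p - 1) / 3 = (m - 1) / 3
      · rw [hq]
        generalize (m - 1) / 3 ^^^ (k - 1) / 3 = Q
        split_ifs <;> omega
      · have hQ : (p - 1) / 3 ^^^ (k - 1) / 3 ≠ (m - 1) / 3 ^^^ (k - 1) / 3 :=
          fun e => hq (Nat.xor_left_injective e)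
        generalize (m - 1) / 3 ^^^ (k - 1) / 3 = Q at *
        generalize (p - 1) / 3 ^^^ (k - 1) / 3 = Q' at *
        split_ifs <;> omega

lemma Base_ne {m k x : ℕ} (h : Base m k x) : x ≠ F m k := by
  unfold Base at h
  rcases Nat.eq_zero_or_pos m with rfl | hm <;> rcases Nat.eq_zero_or_pos k with rfl | hk
  · have e : F 0 0 = 4 := rfl
    omega
  · have e : F 0 k = 3 * (k % 2) := by simp [F]; omega
    omega
  · have e : F m 0 = 3 * (m % 2) := by simp [F]; omega
    omega
  · rw [F_pos (by omega) (by omega)]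
    omega

/-- Cutting off nonempty paths of two consecutive lengths reaches two values of a block. -/
lemma F_pair {m k p r Q x : ℕ} (hp : p + 2 ≤ m) (hr : r < 2) (hF : F p k = 4 * (Q + 1) + 2 * r)
    (hx : x / 4 = Q + 1) (hx' : x % 4 = 2 * r + 1 ∨ x % 4 = 2 - 2 * r) :
    ∃ p t, p < m ∧ (t = m - p - 1 ∨ t = m - p) ∧ F p k ^^^ pathVal t = x := by
  -- the odd length gives the first residue, the even one the second
  have ht : ∃ t, (t = m - p - 1 ∨ t = m - p) ∧ t % 2 = x % 2 := by
    rcases Nat.mod_two_eq_zero_or_one (m - p + x) with h | h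
    · exact ⟨m - p, Or.inr rfl, by omega⟩
    · exact ⟨m - p - 1, Or.inl rfl, by omega⟩
  obtain ⟨t, ht, hpar⟩ := ht
  refine ⟨p, t, by omega, ht, ?_⟩
  rw [xor_pathVal, hF, if_neg (by omega)]
  split_ifs <;> omega

/-- All four values in a block of smaller index are reached by shortening the first tail into
an earlier block of three. -/
lemma F_block {m k a' x : ℕ} (hk : k ≠ 0) (ha : a' < (m - 1) / 3)
    (hx : x / 4 = (a' ^^^ (k - 1) / 3) + 1) :
    ∃ p t, p < m ∧ (t = m - p - 1 ∨ t = m - p) ∧ F p k ^^^ pathVal t = x := by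
  have e1 := F_pos (m := 3 * a' + 1) (k := k) (by omega) hk
  have e2 := F_pos (m := 3 * a' + 2) (k := k) (by omega) hk
  rw [show (3 * a' + 1 - 1) / 3 = a' by omega] at e1
  rw [show (3 * a' + 2 - 1) / 3 = a' by omega] at e2
  generalize a' ^^^ (k - 1) / 3 = Q at *
  by_cases h : x % 4 = 2 * ((k - 1) % 3 % 2) + 1 ∨ x % 4 = 2 - 2 * ((k - 1) % 3 % 2)
  · exact F_pair (p := 3 * a' + 1) (by omega) (Nat.mod_lt _ two_pos) (by rw [e1]; omega) hx h
  · exact F_pair (p := 3 * a' + 2) (r := 1 - (k - 1) % 3 % 2) (by omega) (by omega)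
      (by rw [e2]; omega) hx (by omega)

/-- Inside one block, the two values missing when `i + j` is odd are reached by deleting the last
vertex or the last edge of a tail whose length is `2` modulo `3`. -/
lemma F_inner {m k x : ℕ} (hk : k ≠ 0) (hm : (m - 1) % 3 = 1) (hkp : (k - 1) % 3 % 2 = 0)
    (hx : x / 4 = ((m - 1) / 3 ^^^ (k - 1) / 3) + 1) (hx' : x % 4 < 2) :
    ∃ p t, p < m ∧ (t = m - p - 1 ∨ t = m - p) ∧ F p k ^^^ pathVal t = x := by
  have e1 := F_pos (m := m - 1) (k := k) (by omega) hk
  rw [show (m - 1 - 1) / 3 = (m - 1) / 3 by omega] at e1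
  generalize (m - 1) / 3 ^^^ (k - 1) / 3 = Q at *
  refine ⟨m - 1, x % 4, by omega, by omega, ?_⟩
  rw [xor_pathVal, e1]
  split_ifs <;> omega

lemma F_reach {m k x : ℕ} (hx : x < F m k) : Base m k x ∨
    (∃ p t, p < m ∧ (t = m - p - 1 ∨ t = m - p) ∧ F p k ^^^ pathVal t = x) ∨
    (∃ p t, p < k ∧ (t = k - p - 1 ∨ t = k - p) ∧ F m p ^^^ pathVal t = x) := by
  rcases Nat.eq_zero_or_pos m with rfl | hm
  · left
    unfold Base
    rcases Nat.eq_zero_or_pos k with rfl | hk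
    · have e : F 0 0 = 4 := rfl
      omega
    · have e : F 0 k = 3 * (k % 2) := by simp [F]; omega
      omega
  rcases Nat.eq_zero_or_pos k with rfl | hk
  · left
    unfold Base
    have e : F m 0 = 3 * (m % 2) := by simp [F]; omega
    omega
  rw [F_pos (by omega) (by omega)] at hx
  rcases Nat.lt_or_ge x 4 with h4 | h4
  · left
    unfold Base
    omega
  right
  rcases Nat.lt_or_ge (x / 4 - 1) ((m - 1) / 3 ^^^ (k - 1) / 3) with hq | hq
  · rcases Nat.lt_xor_cases hq with h | h
    · left
      refine F_block (by omega) h ?_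
      rw [Nat.xor_assoc, Nat.xor_self, Nat.xor_zero]
      omega
    · right
      simp only [F_comm m]
      refine F_block (by omega) h ?_
      rw [Nat.xor_assoc, Nat.xor_self, Nat.xor_zero]
      omega
  · by_cases h : (m - 1) % 3 = 1
    · left
      exact F_inner (by omega) h (by omega) (by omega) (by omega)
    · right
      simp only [F_comm m]
      refine F_inner (by omega) (by omega) (by omega) ?_ (by omega)
      rw [Nat.xor_comm]
      omega

/-! ### The graphs with two tails -/

/-- The parent function for the cycle `0, …, c - 1`, the vertex `B = c`, the first tail
`c + 1, c + 2, …` and the second tail `c + d + 1, c + d + 2, …`. The successor on the cycle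
serves as parent there; every tail vertex points towards `B`. The labels of the second tail
start after a fixed offset `d`, so that shortening the first tail relabels nothing. -/
def upar (c d v : ℕ) : ℕ :=
  if v + 1 < c then v + 1 else if v ≤ c then 0 else if v = c + d + 1 then c else v - 1

/-- The vertices of `G_{m,k}`, with second tail starting after offset `d ≥ m`. -/
def SS (c d m k : ℕ) : Finset ℕ := Finset.range (c + 1 + m) ∪ Finset.Ioc (c + d) (c + d + k)

lemma mem_SS {c d m k v : ℕ} :
    v ∈ SS c d m k ↔ v < c + 1 + m ∨ (c + d < v ∧ v ≤ c + d + k) := by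
  simp [SS]

lemma card_SS {c d m k : ℕ} (h : m ≤ d) : (SS c d m k).card = c + 1 + m + k := by
  unfold SS
  rw [Finset.card_union_of_disjoint]
  · simp
  · rw [Finset.disjoint_left]
    intro v
    simp only [Finset.mem_range, Finset.mem_Ioc]
    omega

section
variable {c d : ℕ}

lemma upar_proper (hc : 3 ≤ c) : Proper (upar c d) := by
  intro v
  unfold upar
  constructor <;> split_ifs <;> omega

lemma good_SS {m k : ℕ} : Good (upar c d) (SS c d m k) (SS c d m k) := by
  intro v hv
  refine ⟨hv, ?_⟩
  rw [mem_SS] at *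
  unfold upar
  split_ifs <;> omega

/-- Removing any cycle edge `{v₀, v₀ + 1}` leaves a bipartite graph, as no other cycle exists. -/
lemma grundy_cut (hc : 3 ≤ c) (hodd : Odd c) {S T : Finset ℕ} (hg : Good (upar c d) S T)
    (v₀ : ℕ) (h0 : v₀ < c) (hT : v₀ ∉ T) :
    grundy (Gen (upar c d) S T) = S.card % 2 + 2 * (T.card % 2) := by
  obtain ⟨e, he⟩ := hodd
  refine grundy_bipartite (upar_proper hc) S T hg
    (fun v => decide ((if v ≤ v₀ then v else if v < c then v + 1
      else if v ≤ c + d then v else v + d) % 2 = 0)) ?_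
  intro v hv
  have hne : v ≠ v₀ := fun e => hT (e ▸ hv)
  simp only [ne_eq, decide_eq_decide]
  unfold upar
  split_ifs <;> omega

lemma del_card_of_dg {T : Finset ℕ} {w : ℕ} (U : Finset ℕ)
    (hU : ∀ v, v ∈ U ↔ v ∈ T ∧ (v = w ∨ upar c d v = w)) :
    (del (upar c d) T w).card + U.card = T.card := by
  rw [← card_del (par := upar c d) T w]
  unfold dg
  congr 2
  ext v
  rw [hU, Finset.mem_filter]

lemma grundy_cycle (hc : 3 ≤ c) (hodd : Odd c) :
    grundy (Gen (upar c d) (Finset.range c) (Finset.range c)) = 0 := by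
  have hodd' := hodd
  obtain ⟨e, he⟩ := hodd'
  have hg : Good (upar c d) (Finset.range c) (Finset.range c) := by
    intro v hv
    refine ⟨hv, ?_⟩
    simp only [Finset.mem_range] at *
    unfold upar
    split_ifs <;> omega
  rw [grundy_Gen_iff (upar_proper hc)]
  refine ⟨fun w hw => ?_, fun v hv => ?_, fun x hx => absurd hx (by omega)⟩
  · have hw' := Finset.mem_range.1 hw
    rw [grundy_cut hc hodd (hg.del w) w hw' (by simp [mem_del])]
    have e1 := Finset.card_erase_add_one hw
    -- the two edges at `w`: its own and that of its predecessor on the cycle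
    have e2 := del_card_of_dg (c := c) (d := d) (T := Finset.range c) (w := w)
      {w, if w = 0 then c - 1 else w - 1} (by
        intro v
        simp only [Finset.mem_range, Finset.mem_insert, Finset.mem_singleton]
        unfold upar
        split_ifs <;> omega)
    rw [Finset.card_pair (by split_ifs <;> omega)] at e2
    rw [Finset.card_range] at e1 e2
    omega
  · rw [grundy_cut hc hodd (hg.erase v) v (Finset.mem_range.1 hv) (by simp)]
    have e1 := Finset.card_erase_add_one hv
    rw [Finset.card_range] at *
    omega

/-- A segment of a tail is a path. -/
lemma grundy_path (hc : 3 ≤ c) (hodd : Odd c) (x y : ℕ) (hx : c ≤ x)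
    (hd : y ≤ c + d ∨ c + d ≤ x) :
    Good (upar c d) (Finset.Ioc x y) (Finset.Ioc (x + 1) y) ∧
    grundy (Gen (upar c d) (Finset.Ioc x y) (Finset.Ioc (x + 1) y)) = pathVal (y - x) := by
  have hg : Good (upar c d) (Finset.Ioc x y) (Finset.Ioc (x + 1) y) := by
    intro v hv
    simp only [Finset.mem_Ioc] at *
    unfold upar
    split_ifs <;> omega
  refine ⟨hg, ?_⟩
  rw [grundy_cut hc hodd hg 0 (by omega) (by simp), Nat.card_Ioc, Nat.card_Ioc]
  unfold pathVal
  split_ifs <;> omega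

/-- Deleting an edge (`q = p`) or a vertex (`q = p + 1`) of the first tail leaves `G_{p,k}` and a
path with `m - q` vertices. -/
lemma grundy_tail_left (hc : 3 ≤ c) (hodd : Odd c) {m k p q : ℕ} (hm : m ≤ d)
    (hq : p ≤ q) {S T : Finset ℕ}
    (hS : ∀ v, v ∈ S ↔ v ∈ SS c d p k ∨ (c + q < v ∧ v ≤ c + m))
    (hT : ∀ v, v ∈ T ↔ v ∈ SS c d p k ∨ (c + q + 1 < v ∧ v ≤ c + m)) :
    grundy (Gen (upar c d) S T) =
      grundy (Gen (upar c d) (SS c d p k) (SS c d p k)) ^^^ pathVal (m - q) := by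
  obtain ⟨h1, h2⟩ := grundy_path (d := d) hc hodd (c + q) (c + m) (by omega) (by omega)
  rw [show m - q = c + m - (c + q) by omega, ← h2, ← grundy_Gen_union good_SS h1]
  · congr 2 <;> ext v <;> simp [hS, hT]
  · rw [Finset.disjoint_left]
    intro v
    simp only [mem_SS, Finset.mem_Ioc]
    omega

lemma grundy_tail_right (hc : 3 ≤ c) (hodd : Odd c) {m k p q : ℕ} (hm : m ≤ d)
    (hq : p ≤ q) {S T : Finset ℕ}
    (hS : ∀ v, v ∈ S ↔ v ∈ SS c d m p ∨ (c + d + q < v ∧ v ≤ c + d + k))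
    (hT : ∀ v, v ∈ T ↔ v ∈ SS c d m p ∨ (c + d + q + 1 < v ∧ v ≤ c + d + k)) :
    grundy (Gen (upar c d) S T) =
      grundy (Gen (upar c d) (SS c d m p) (SS c d m p)) ^^^ pathVal (k - q) := by
  obtain ⟨h1, h2⟩ := grundy_path (d := d) hc hodd (c + d + q) (c + d + k) (by omega) (by omega)
  rw [show k - q = c + d + k - (c + d + q) by omega, ← h2, ← grundy_Gen_union good_SS h1]
  · congr 2 <;> ext v <;> simp [hS, hT]
  · rw [Finset.disjoint_left]
    intro v
    simp only [mem_SS, Finset.mem_Ioc]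
    omega

/-- When the cycle is disconnected from the tails, it contributes the value `0`. -/
lemma grundy_off_cycle (hc : 3 ≤ c) (hodd : Odd c) {S T S' T' : Finset ℕ}
    (hS' : ∀ v ∈ S', c ≤ v) (hg : Good (upar c d) S' T')
    (hS : ∀ v, v ∈ S ↔ v < c ∨ v ∈ S') (hT : ∀ v, v ∈ T ↔ v < c ∨ v ∈ T') :
    grundy (Gen (upar c d) S T) = S'.card % 2 + 2 * (T'.card % 2) := by
  have hgc : Good (upar c d) (Finset.range c) (Finset.range c) := by
    intro v hv
    refine ⟨hv, ?_⟩
    simp only [Finset.mem_range] at *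
    unfold upar
    split_ifs <;> omega
  have h0 : 0 ∉ T' := fun h => by
    have := hS' 0 (hg 0 h).1
    omega
  have hu := grundy_Gen_union hgc hg (by
    rw [Finset.disjoint_left]
    intro v hv hv'
    have := hS' v hv'
    have := Finset.mem_range.1 hv
    omega)
  rw [grundy_cycle hc hodd, Nat.zero_xor, grundy_cut hc hodd hg 0 (by omega) h0] at hu
  rw [← hu]
  congr 2 <;> ext v <;> simp [hS, hT]

lemma val_cycle_edge (hc : 3 ≤ c) (hodd : Odd c) {m k : ℕ} (hm : m ≤ d)
    {v : ℕ} (hv : v < c) :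
    grundy (Gen (upar c d) (SS c d m k) ((SS c d m k).erase v)) =
      (m + k) % 2 + 2 * ((m + k + 1) % 2) := by
  rw [grundy_cut hc hodd (good_SS.erase v) v hv (by simp)]
  have e1 := Finset.card_erase_add_one (mem_SS.2 (Or.inl (by omega)) : v ∈ SS c d m k)
  rw [card_SS hm] at *
  obtain ⟨e, he⟩ := hodd
  omega

lemma val_cycle_vertex (hc : 3 ≤ c) (hodd : Odd c) {m k : ℕ} (hm : m ≤ d)
    {w : ℕ} (hw : w < c) (hw0 : w ≠ 0) :
    grundy (Gen (upar c d) ((SS c d m k).erase w) (del (upar c d) (SS c d m k) w)) =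
      (m + k + 1) % 2 + 2 * ((m + k) % 2) := by
  rw [grundy_cut hc hodd (good_SS.del w) w hw (by simp [mem_del])]
  have e1 := Finset.card_erase_add_one (mem_SS.2 (Or.inl (by omega)) : w ∈ SS c d m k)
  have e2 := del_card_of_dg (c := c) (d := d) (T := SS c d m k) (w := w) {w, w - 1} (by
    intro v
    simp only [mem_SS, Finset.mem_insert, Finset.mem_singleton]
    unfold upar
    split_ifs <;> omega)
  rw [Finset.card_pair (by omega)] at e2
  rw [card_SS hm] at *
  obtain ⟨e, he⟩ := hodd
  omega

lemma val_A (hc : 3 ≤ c) (hodd : Odd c) {m k : ℕ} (hm : m ≤ d) :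
    grundy (Gen (upar c d) ((SS c d m k).erase 0) (del (upar c d) (SS c d m k) 0)) =
      3 * ((m + k + 1) % 2) := by
  rw [grundy_cut hc hodd (good_SS.del 0) 0 (by omega) (by simp [mem_del])]
  have e1 := Finset.card_erase_add_one (mem_SS.2 (Or.inl (by omega)) : 0 ∈ SS c d m k)
  have e2 := del_card_of_dg (c := c) (d := d) (T := SS c d m k) (w := 0) {0, c - 1, c} (by
    intro v
    simp only [mem_SS, Finset.mem_insert, Finset.mem_singleton]
    generalize hu : upar c d v = u
    unfold upar at hu
    split_ifs at hu <;> omega)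
  rw [Finset.card_eq_three.2 ⟨0, c - 1, c, by omega, by omega, by omega, rfl⟩] at e2
  rw [card_SS hm] at *
  obtain ⟨e, he⟩ := hodd
  omega

lemma val_AB (hc : 3 ≤ c) (hodd : Odd c) {m k : ℕ} (hm : m ≤ d) :
    grundy (Gen (upar c d) (SS c d m k) ((SS c d m k).erase c)) =
      (m + k + 1) % 2 + 2 * ((m + k) % 2) := by
  have hdis : Disjoint (Finset.Ioc c (c + m)) (Finset.Ioc (c + d) (c + d + k)) := by
    rw [Finset.disjoint_left]
    intro v
    simp only [Finset.mem_Ioc]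
    omega
  rw [grundy_off_cycle hc hodd
    (S' := insert c (Finset.Ioc c (c + m) ∪ Finset.Ioc (c + d) (c + d + k)))
    (T' := Finset.Ioc c (c + m) ∪ Finset.Ioc (c + d) (c + d + k))]
  · rw [Finset.card_insert_of_notMem (by simp), Finset.card_union_of_disjoint hdis]
    simp only [Nat.card_Ioc]
    omega
  · intro v
    simp only [Finset.mem_insert, Finset.mem_union, Finset.mem_Ioc]
    omega
  · intro v hv
    simp only [Finset.mem_insert, Finset.mem_union, Finset.mem_Ioc] at *
    unfold upar
    split_ifs <;> omega
  · intro v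
    simp only [mem_SS, Finset.mem_insert, Finset.mem_union, Finset.mem_Ioc]
    omega
  · intro v
    simp only [Finset.mem_erase, mem_SS, Finset.mem_union, Finset.mem_Ioc]
    omega

lemma val_B (hc : 3 ≤ c) (hodd : Odd c) {m k : ℕ} (hm : m ≤ d) :
    grundy (Gen (upar c d) ((SS c d m k).erase c) (del (upar c d) (SS c d m k) c)) =
      (m + k) % 2 + 2 * ((m - 1 + (k - 1)) % 2) := by
  rw [grundy_off_cycle hc hodd
    (S' := Finset.Ioc c (c + m) ∪ Finset.Ioc (c + d) (c + d + k))
    (T' := Finset.Ioc (c + 1) (c + m) ∪ Finset.Ioc (c + d + 1) (c + d + k))]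
  · rw [Finset.card_union_of_disjoint, Finset.card_union_of_disjoint]
    · simp only [Nat.card_Ioc]
      omega
    all_goals
      rw [Finset.disjoint_left]
      intro v
      simp only [Finset.mem_Ioc]
      omega
  · intro v
    simp only [Finset.mem_union, Finset.mem_Ioc]
    omega
  · intro v hv
    simp only [Finset.mem_union, Finset.mem_Ioc] at *
    unfold upar
    split_ifs <;> omega
  · intro v
    simp only [Finset.mem_erase, mem_SS, Finset.mem_union, Finset.mem_Ioc]
    omega
  · intro v
    simp only [mem_del, mem_SS, Finset.mem_union, Finset.mem_Ioc]
    unfold upar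
    split_ifs <;> omega

lemma val_left_edge (hc : 3 ≤ c) (hodd : Odd c) {m k : ℕ} (hm : m ≤ d)
    {p : ℕ} (hp : p < m) :
    grundy (Gen (upar c d) (SS c d m k) ((SS c d m k).erase (c + p + 1))) =
      grundy (Gen (upar c d) (SS c d p k) (SS c d p k)) ^^^ pathVal (m - p) := by
  apply grundy_tail_left hc hodd hm le_rfl
  · intro v
    simp only [mem_SS]
    omega
  · intro v
    simp only [Finset.mem_erase, mem_SS]
    omega

lemma val_left_vertex (hc : 3 ≤ c) (hodd : Odd c) {m k : ℕ} (hm : m ≤ d)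
    {p : ℕ} (hp : p < m) :
    grundy (Gen (upar c d) ((SS c d m k).erase (c + p + 1))
        (del (upar c d) (SS c d m k) (c + p + 1))) =
      grundy (Gen (upar c d) (SS c d p k) (SS c d p k)) ^^^ pathVal (m - p - 1) := by
  rw [Nat.sub_sub]
  apply grundy_tail_left hc hodd hm (Nat.le_succ p)
  · intro v
    simp only [Finset.mem_erase, mem_SS]
    omega
  · intro v
    simp only [mem_del, mem_SS]
    unfold upar
    split_ifs <;> omega

lemma val_right_edge (hc : 3 ≤ c) (hodd : Odd c) {m k : ℕ} (hm : m ≤ d)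
    {p : ℕ} (hp : p < k) :
    grundy (Gen (upar c d) (SS c d m k) ((SS c d m k).erase (c + d + p + 1))) =
      grundy (Gen (upar c d) (SS c d m p) (SS c d m p)) ^^^ pathVal (k - p) := by
  apply grundy_tail_right hc hodd hm le_rfl
  · intro v
    simp only [mem_SS]
    omega
  · intro v
    simp only [Finset.mem_erase, mem_SS]
    omega

lemma val_right_vertex (hc : 3 ≤ c) (hodd : Odd c) {m k : ℕ} (hm : m ≤ d)
    {p : ℕ} (hp : p < k) :
    grundy (Gen (upar c d) ((SS c d m k).erase (c + d + p + 1))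
        (del (upar c d) (SS c d m k) (c + d + p + 1))) =
      grundy (Gen (upar c d) (SS c d m p) (SS c d m p)) ^^^ pathVal (k - p - 1) := by
  rw [Nat.sub_sub]
  apply grundy_tail_right hc hodd hm (Nat.le_succ p)
  · intro v
    simp only [Finset.mem_erase, mem_SS]
    omega
  · intro v
    simp only [mem_del, mem_SS]
    unfold upar
    split_ifs <;> omega

lemma grundy_two_tails (hc : 3 ≤ c) (hodd : Odd c) (m k : ℕ) (hm : m ≤ d) :
    grundy (Gen (upar c d) (SS c d m k) (SS c d m k)) = F m k := by
  induction hn : m + k using Nat.strong_induction_on generalizing m k with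
  | _ n ih =>
  have ihl : ∀ p < m, grundy (Gen (upar c d) (SS c d p k) (SS c d p k)) = F p k :=
    fun p hp => ih _ (by omega) p k (by omega) rfl
  have ihr : ∀ p < k, grundy (Gen (upar c d) (SS c d m p) (SS c d m p)) = F m p :=
    fun p hp => ih _ (by omega) m p hm rfl
  -- the position of a vertex: cycle, `B`, first tail, second tail
  have place : ∀ v ∈ SS c d m k, v = 0 ∨ (v < c ∧ v ≠ 0) ∨ v = c ∨
      (∃ p < m, v = c + p + 1) ∨ ∃ p < k, v = c + d + p + 1 := by
    intro v hv
    rw [mem_SS] at hv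
    by_cases h1 : v ≤ c
    · omega
    · by_cases h2 : v < c + 1 + m
      · exact Or.inr (Or.inr (Or.inr (Or.inl ⟨v - c - 1, by omega, by omega⟩)))
      · exact Or.inr (Or.inr (Or.inr (Or.inr ⟨v - c - d - 1, by omega, by omega⟩)))
  rw [grundy_Gen_iff (upar_proper hc)]
  refine ⟨fun w hw => ?_, fun v hv => ?_, fun x hx => ?_⟩
  · rcases place w hw with rfl | ⟨h, h0⟩ | rfl | ⟨p, hp, rfl⟩ | ⟨p, hp, rfl⟩
    · exact Base_ne (Or.inr (Or.inr (Or.inl (val_A hc hodd hm))))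
    · exact Base_ne (Or.inr (Or.inl (val_cycle_vertex hc hodd hm h h0)))
    · exact Base_ne (Or.inr (Or.inr (Or.inr (val_B hc hodd hm))))
    · rw [val_left_vertex hc hodd hm hp, ihl p hp]
      exact F_tail_ne hp (Or.inl rfl)
    · rw [val_right_vertex hc hodd hm hp, ihr p hp, F_comm m, F_comm m]
      exact F_tail_ne hp (Or.inl rfl)
  · rcases place v hv with rfl | ⟨h, -⟩ | rfl | ⟨p, hp, rfl⟩ | ⟨p, hp, rfl⟩
    · exact Base_ne (Or.inl (val_cycle_edge hc hodd hm (by omega)))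
    · exact Base_ne (Or.inl (val_cycle_edge hc hodd hm h))
    · exact Base_ne (Or.inr (Or.inl (val_AB hc hodd hm)))
    · rw [val_left_edge hc hodd hm hp, ihl p hp]
      exact F_tail_ne hp (Or.inr rfl)
    · rw [val_right_edge hc hodd hm hp, ihr p hp, F_comm m, F_comm m]
      exact F_tail_ne hp (Or.inr rfl)
  · rcases F_reach hx with (rfl | rfl | rfl | rfl) | ⟨p, t, hp, rfl | rfl, rfl⟩ |
      ⟨p, t, hp, rfl | rfl, rfl⟩
    · exact Or.inr ⟨0, mem_SS.2 (by omega), val_cycle_edge hc hodd hm (by omega)⟩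
    · exact Or.inr ⟨c, mem_SS.2 (by omega), val_AB hc hodd hm⟩
    · exact Or.inl ⟨0, mem_SS.2 (by omega), val_A hc hodd hm⟩
    · exact Or.inl ⟨c, mem_SS.2 (by omega), val_B hc hodd hm⟩
    · exact Or.inl ⟨c + p + 1, mem_SS.2 (by omega), by
        rw [val_left_vertex hc hodd hm hp, ihl p hp]⟩
    · exact Or.inr ⟨c + p + 1, mem_SS.2 (by omega), by
        rw [val_left_edge hc hodd hm hp, ihl p hp]⟩
    · exact Or.inl ⟨c + d + p + 1, mem_SS.2 (by omega), by
        rw [val_right_vertex hc hodd hm hp, ihr p hp]⟩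
    · exact Or.inr ⟨c + d + p + 1, mem_SS.2 (by omega), by
        rw [val_right_edge hc hodd hm hp, ihr p hp]⟩

end

/-- With offset `d = m`, the labelling is that of `Gmk`. -/
lemma Gmk_eq (c m k : ℕ) (hc : 3 ≤ c) :
    Gmk c m k = Gen (upar c m) (SS c m m k) (SS c m m k) := by
  have hcyc : ∀ i < c, upar c m i = (i + 1) % c := by
    intro i hi
    unfold upar
    split_ifs with h
    · rw [Nat.mod_eq_of_lt h]
    · rw [show i + 1 = c by omega, Nat.mod_self]
    all_goals omega
  have hB : upar c m c = 0 := by unfold upar; split_ifs <;> omega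
  have hl : ∀ i < m, upar c m (c + i + 1) = c + i := by
    intro i hi; unfold upar; split_ifs <;> omega
  have hr : ∀ i, upar c m (c + m + i + 1) = if i = 0 then c else c + m + i := by
    intro i; unfold upar; split_ifs <;> omega
  ext σ
  simp only [Gmk, mem_Gen, Finset.mem_union, Finset.mem_image, Finset.mem_range,
    Finset.mem_singleton]
  constructor
  · rintro ((((⟨i, hi, rfl⟩ | ⟨i, hi, rfl⟩) | rfl) | ⟨i, hi, rfl⟩) | ⟨i, hi, rfl⟩)
    · exact Or.inl ⟨i, mem_SS.2 (by omega), rfl⟩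
    · exact Or.inr ⟨i, mem_SS.2 (by omega), by rw [hcyc i hi]⟩
    · exact Or.inr ⟨c, mem_SS.2 (by omega), by rw [hB, Finset.pair_comm]⟩
    · exact Or.inr ⟨c + i + 1, mem_SS.2 (by omega), by rw [hl i hi, Finset.pair_comm]⟩
    · exact Or.inr ⟨c + m + i + 1, mem_SS.2 (by omega), by rw [hr i, Finset.pair_comm]⟩
  · rintro (⟨v, hv, rfl⟩ | ⟨v, hv, rfl⟩) <;> rw [mem_SS] at hv
    · exact Or.inl (Or.inl (Or.inl (Or.inl ⟨v, by omega, rfl⟩)))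
    · rcases Nat.lt_trichotomy v c with h | rfl | h
      · exact Or.inl (Or.inl (Or.inl (Or.inr ⟨v, h, by rw [hcyc v h]⟩)))
      · exact Or.inl (Or.inl (Or.inr (by rw [hB, Finset.pair_comm])))
      · by_cases h2 : v ≤ c + m
        · obtain ⟨i, rfl⟩ : ∃ i, v = c + i + 1 := ⟨v - c - 1, by omega⟩
          exact Or.inl (Or.inr ⟨i, by omega, by rw [hl i (by omega), Finset.pair_comm]⟩)
        · obtain ⟨i, rfl⟩ : ∃ i, v = c + m + i + 1 := ⟨v - c - m - 1, by omega⟩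
          exact Or.inr ⟨i, by omega, by rw [hr i, Finset.pair_comm]⟩

/-- With `g_{m,k}` the nim-value of graph chomp on `G_{m,k}` (for any
fixed odd cycle length `c ≥ 3`), for all `a, b ≥ 0` and `i, j ∈ {1,2,3}` we have
`g_{3a+i,3b+j} = 4·((a XOR b) + 1)` if `i + j` is even and
`g_{3a+i,3b+j} = 4·((a XOR b) + 1) + 2` if `i + j` is odd. -/
theorem grundy_Gmk_formula (c : ℕ) (hc : 3 ≤ c) (hcodd : Odd c)
    (a b i j : ℕ) (hi : i ∈ ({1, 2, 3} : Finset ℕ)) (hj : j ∈ ({1, 2, 3} : Finset ℕ)) :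
    (Even (i + j) → grundy (Gmk c (3 * a + i) (3 * b + j)) = 4 * ((a ^^^ b) + 1)) ∧
    (Odd (i + j) → grundy (Gmk c (3 * a + i) (3 * b + j)) = 4 * ((a ^^^ b) + 1) + 2) := by
  rw [Gmk_eq c _ _ hc, grundy_two_tails hc hcodd _ _ le_rfl]
  simp only [Finset.mem_insert, Finset.mem_singleton] at hi hj
  rw [F_pos (by omega) (by omega), show (3 * a + i - 1) / 3 = a by omega,
    show (3 * b + j - 1) / 3 = b by omega, Nat.even_iff, Nat.odd_iff]
  constructor <;> intro h <;> omega
end
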